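/- Let X and Y be the almost invariant sets arising from splittings σ and τ of a group G over subgroups H and K respectively. If two of the four corners X∩Y, X∩Y*, X*∩Y, X*∩Y* of the pair (X,Y) are H-finite, then σ and τ are isomorphic splittings, i.e. there is a G-equivariant graph isomorphism between the trees of σ and τ. -/

import Mathlib

/-!
The standard sets `X` and `Y` are the sets of `g` moving a base vertex into a side `A`, respectively
`B`, of an edge. The properties of such a side used below are collected in `HalfSpace`; in particular
neither `X`, `Xᶜ` (`HalfSpace.not_small`) nor `Y`, `Yᶜ` (`HalfSpace.not_hFinite`) is `H`-finite.
Hence the two `H`-finite corners are opposite, and after reversing the second edge if necessary, `X`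
and `Y` are `H`-almost equal (`Close`). Then `H = K` (`HalfSpace.le_left`, `HalfSpace.le_right`).

For `u ∉ H`, one of the four corners of `(A, u • A)` is empty, so a corner of `(B, u • B)` is small,
while one of its corners is empty too. As half-spaces are not small, both pairs have the same empty
corner, except that `A ∩ u • A` and `Bᶜ ∩ u • Bᶜ` (or vice versa) may both be empty
(`HalfSpace.emptyCorner_class`). This exception really occurs, for amalgamated products in which `H`
has index two in a vertex group; such a `u` (`Bad`) normalizes `H` and has its square in `H`, and
then `A` can be traded for `(u • A)ᶜ`, which is also close to `B`. Doing this with a maximal choice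
removes all exceptions (`HalfSpace.exists_equivalent`).

Now the translates of the two half-spaces are nested in the same way. The vertices of a tree are the
classes of directed edges with the same origin, and this relation can be read off from the
inclusions between half-spaces (`GTree.covers_iff`), so the trees are isomorphic
(`GTree.equivIso_of_emptyCorner`).
-/

open scoped Pointwise

universe u v w

/-- A subset `S` of `G` is `H`-finite if it is contained in the union of
finitely many right cosets `Hg` of `H` in `G`. -/
def HFinite {G : Type u} [Group G] (H : Subgroup G) (S : Set G) : Prop :=
  ∃ F : Finset G, S ⊆ ⋃ g ∈ F, (H : Set G) * {g}

/-- Two subsets of `G` are `H`-almost equal if their symmetric difference is `H`-finite. -/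
def HAlmostEqual {G : Type u} [Group G] (H : Subgroup G) (A B : Set G) : Prop :=
  HFinite H ((A \ B) ∪ (B \ A))

/-- `X` is an `H`-almost invariant subset of `G`: `hX = X` for all `h ∈ H`, and for
every `g ∈ G` the symmetric difference of `Xg` and `X` is `H`-finite. -/
def IsAlmostInvariant {G : Type u} [Group G] (H : Subgroup G) (X : Set G) : Prop :=
  (∀ h ∈ H, (fun x => h * x) '' X = X) ∧
    ∀ g : G, HAlmostEqual H ((fun x => x * g) '' X) X

/-- An `H`-almost invariant set is nontrivial if neither it nor its complement is `H`-finite. -/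
def IsNontrivialAI {G : Type u} [Group G] (H : Subgroup G) (X : Set G) : Prop :=
  ¬ HFinite H X ∧ ¬ HFinite H Xᶜ

/-- A `G`-tree: a connected acyclic simple graph together with an action of `G` on its
vertices by graph automorphisms, such that no element of `G` interchanges the two
endpoints of any edge. -/
structure GTree (G : Type u) [Group G] (V : Type v) where
  graph : SimpleGraph V
  smul : G → V → V
  smul_one : ∀ x : V, smul 1 x = x
  smul_mul : ∀ (g h : G) (x : V), smul (g * h) x = smul g (smul h x)
  adj_smul : ∀ (g : G) (x y : V), graph.Adj x y → graph.Adj (smul g x) (smul g y)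
  no_inversion : ∀ (g : G) (x y : V), graph.Adj x y → ¬ (smul g x = y ∧ smul g y = x)
  connected : graph.Connected
  acyclic : graph.IsAcyclic

namespace GTree

variable {G : Type u} [Group G] {V : Type v}

/-- The stabilizer of the directed edge `(a, b)`. -/
def edgeStab (T : GTree G V) (a b : V) : Subgroup G where
  carrier := {g : G | T.smul g a = a ∧ T.smul g b = b}
  one_mem' := ⟨T.smul_one a, T.smul_one b⟩
  mul_mem' := by
    rintro x y ⟨hxa, hxb⟩ ⟨hya, hyb⟩
    exact ⟨by rw [T.smul_mul, hya, hxa], by rw [T.smul_mul, hyb, hxb]⟩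
  inv_mem' := by
    rintro x ⟨hxa, hxb⟩
    constructor
    · conv_lhs => rw [← hxa]
      rw [← T.smul_mul, inv_mul_cancel, T.smul_one]
    · conv_lhs => rw [← hxb]
      rw [← T.smul_mul, inv_mul_cancel, T.smul_one]

/-- The `a`-side of the directed edge `(a, b)`: the set of vertices reachable from `a`
after deleting the edge `{a, b}`. -/
def side (T : GTree G V) (a b : V) : Set V :=
  {x : V | (T.graph.deleteEdges {s(a, b)}).Reachable a x}

/-- The standard set determined by the directed edge `(a, b)` and the base vertex `v`:
`{g ∈ G | g • v lies in the a-side of (a, b)}`. -/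
def standardSet (T : GTree G V) (a b : V) (v : V) : Set G :=
  {g : G | T.smul g v ∈ T.side a b}

/-- `(T, a, b)` is a splitting of `G` over `H`: the `G`-tree `T` has no global fixed
vertex, `G` acts transitively on the undirected edges, `(a, b)` is a directed edge,
and the stabilizer of `(a, b)` is `H`. -/
def IsSplitting (T : GTree G V) (a b : V) (H : Subgroup G) : Prop :=
  T.graph.Adj a b ∧
  (∀ x : V, ∃ g : G, T.smul g x ≠ x) ∧
  (∀ c d : V, T.graph.Adj c d →
    ∃ g : G, (T.smul g a = c ∧ T.smul g b = d) ∨ (T.smul g a = d ∧ T.smul g b = c)) ∧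
  T.edgeStab a b = H

/-- Two `G`-trees are (`G`-equivariantly) isomorphic: there is a graph isomorphism
commuting with the `G`-actions. -/
def EquivIso {V₁ : Type v} {V₂ : Type w} (T₁ : GTree G V₁) (T₂ : GTree G V₂) : Prop :=
  ∃ f : T₁.graph ≃g T₂.graph, ∀ (g : G) (x : V₁), f (T₁.smul g x) = T₂.smul g (f x)

end GTree

/-- `Σ(X)`: the family of all translates of `X` and of its complement. -/
def TransSet {G : Type u} [Group G] (X : Set G) : Set (Set G) :=
  {A : Set G | ∃ g : G, A = g • X ∨ A = (g • X)ᶜ}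

/-- A corner `C` of a pair `(A, B)` is small if it is `Stab(A)`-finite. -/
def SmallCorner {G : Type u} [Group G] (A C : Set G) : Prop :=
  HFinite (MulAction.stabilizer G A) C

/-- At least two of four statements hold. -/
def TwoOfFour (P₁ P₂ P₃ P₄ : Prop) : Prop :=
  (P₁ ∧ P₂) ∨ (P₁ ∧ P₃) ∨ (P₁ ∧ P₄) ∨ (P₂ ∧ P₃) ∨ (P₂ ∧ P₄) ∨ (P₃ ∧ P₄)

/-- Almost inclusion: `A ≤ B` iff `A ∩ B*` is empty or is the only small corner of `(A, B)`. -/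
def AILE {G : Type u} [Group G] (A B : Set G) : Prop :=
  A ∩ Bᶜ = ∅ ∨
    (SmallCorner A (A ∩ Bᶜ) ∧ ¬ SmallCorner A (A ∩ B) ∧ ¬ SmallCorner A (Aᶜ ∩ B) ∧ ¬ SmallCorner A (Aᶜ ∩ Bᶜ))

/-- `A` crosses `B`: no corner of the pair `(A, B)` is small. -/
def AICrosses {G : Type u} [Group G] (A B : Set G) : Prop :=
  ¬ SmallCorner A (A ∩ B) ∧ ¬ SmallCorner A (A ∩ Bᶜ) ∧ ¬ SmallCorner A (Aᶜ ∩ B) ∧ ¬ SmallCorner A (Aᶜ ∩ Bᶜ)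

/-- A finite family of almost invariant sets satisfies sandwiching. -/
def Sandwiching {G : Type u} [Group G] {n : ℕ} (X : Fin n → Set G) : Prop :=
  ∀ j k : Fin n,
    (∃ A ∈ TransSet (X k), ∃ B ∈ TransSet (X k), AILE A (X j) ∧ AILE (X j) B) ∨
    ∀ A ∈ TransSet (X k), AICrosses (X j) A

/-- The splitting over `H` is a trivially ascending HNN extension: `H` is normal in `G`
and `G/H` is infinite cyclic. -/
def TrivAscHNN {G : Type u} [Group G] (H : Subgroup G) : Prop :=
  H.Normal ∧ ∃ t : G, (∀ g : G, ∃ n : ℤ, g * (t ^ n)⁻¹ ∈ H) ∧ ∀ n : ℤ, t ^ n ∈ H → n = 0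

/-- Two subsets are nested if one of the four inclusions among them and their
complements holds. -/
def Nested {G : Type u} (A B : Set G) : Prop :=
  A ⊆ B ∨ A ⊆ Bᶜ ∨ Aᶜ ⊆ B ∨ Aᶜ ⊆ Bᶜ

/-- `X` crosses `Y` with respect to the subgroup `L`: no corner of `(X, Y)` is `L`-finite. -/
def CrossesWrt {G : Type u} [Group G] (L : Subgroup G) (X Y : Set G) : Prop :=
  ¬ HFinite L (X ∩ Y) ∧ ¬ HFinite L (X ∩ Yᶜ) ∧ ¬ HFinite L (Xᶜ ∩ Y) ∧ ¬ HFinite L (Xᶜ ∩ Yᶜ)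

/-! ### Half-spaces and their translates -/

/-- The half-spaces determined by `A`: all translates of `A` and of its complement. -/
def halves (G : Type u) [Group G] {V : Type v} [MulAction G V] (A : Set V) : Set (Set V) :=
  {C | ∃ g : G, C = g • A ∨ C = (g • A)ᶜ}

/-- The properties of one side `A` of an edge, with stabilizer `H`, in the tree of a splitting,
which carry the whole comparison of two splittings: `H` is the stabilizer of `A`, no translate of
`A` is its complement, any two translates are nested, only finitely many half-spaces separate two
given points, `H` fixes a point, and neither `A` nor `Aᶜ` is minimal among the half-spaces. The
set `V` is only assumed to carry an action of `G`. -/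
structure HalfSpace {G : Type u} [Group G] {V : Type v} [MulAction G V]
    (H : Subgroup G) (A : Set V) : Prop where
  stab : ∀ g : G, g • A = A ↔ g ∈ H
  noinv : ∀ g : G, g • A ≠ Aᶜ
  nest : ∀ g : G, g • A ⊆ A ∨ A ⊆ g • A ∨ g • A ⊆ Aᶜ ∨ Aᶜ ⊆ g • A
  disc : ∀ x y : V, {C | C ∈ halves G A ∧ x ∈ C ∧ y ∉ C}.Finite
  fix : ∃ a : V, ∀ h ∈ H, h • a = a
  desc₁ : ∃ C ∈ halves G A, C ⊂ A
  desc₂ : ∃ C ∈ halves G A, C ⊂ Aᶜ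

/-- `S` is covered by finitely many sets `pHq`. This is weaker than being `H`-finite, and unlike
`H`-finiteness it is invariant under left translation. -/
def IsSmall {G : Type u} [Group G] (H : Subgroup G) (S : Set G) : Prop :=
  ∃ F : Set (G × G), F.Finite ∧ ∀ x ∈ S, ∃ p ∈ F, ∃ h ∈ H, x = p.1 * h * p.2

/-- The union of the right cosets `Hf` for `f ∈ F`. -/
def Cosets {G : Type u} [Group G] (H : Subgroup G) (F : Finset G) : Set G :=
  {x | ∃ f ∈ F, x * f⁻¹ ∈ H}

section
variable {G : Type u} [Group G] {H : Subgroup G}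

theorem hFinite_iff {S : Set G} : HFinite H S ↔ ∃ F : Finset G, S ⊆ Cosets H F := by
  unfold HFinite
  refine exists_congr fun F => ?_
  have : (⋃ g ∈ F, (H : Set G) * {g}) = Cosets H F := by
    ext x
    simp only [Set.mul_singleton, Set.image_mul_right, Set.mem_iUnion, Set.mem_preimage,
      SetLike.mem_coe, exists_prop, Cosets, Set.mem_ofPred_eq]
  rw [this]

theorem IsSmall.mono {S T : Set G} (hT : IsSmall H T) (h : S ⊆ T) : IsSmall H S := by
  obtain ⟨F, hF, hh⟩ := hT
  exact ⟨F, hF, fun x hx => hh x (h hx)⟩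

theorem IsSmall.union {S T : Set G} (hS : IsSmall H S) (hT : IsSmall H T) : IsSmall H (S ∪ T) := by
  obtain ⟨F, hF, hh⟩ := hS
  obtain ⟨F', hF', hh'⟩ := hT
  refine ⟨F ∪ F', hF.union hF', ?_⟩
  rintro x (hx | hx)
  · obtain ⟨p, hp, h⟩ := hh x hx
    exact ⟨p, Or.inl hp, h⟩
  · obtain ⟨p, hp, h⟩ := hh' x hx
    exact ⟨p, Or.inr hp, h⟩

theorem IsSmall.translate {S : Set G} (hS : IsSmall H S) (g : G) : IsSmall H {x | g * x ∈ S} := by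
  obtain ⟨F, hF, hh⟩ := hS
  refine ⟨(fun p => (g⁻¹ * p.1, p.2)) '' F, hF.image _, ?_⟩
  intro x hx
  obtain ⟨p, hp, h, hH, e⟩ := hh _ hx
  refine ⟨_, ⟨p, hp, rfl⟩, h, hH, ?_⟩
  simp only
  rw [mul_assoc, mul_assoc, ← mul_assoc p.1, ← e]; group

theorem small_cosets (F : Finset G) : IsSmall H (Cosets H F) := by
  refine ⟨(fun f => ((1 : G), f)) '' (F : Set G), F.finite_toSet.image _, ?_⟩
  rintro x ⟨f, hf, hx⟩
  exact ⟨_, ⟨f, hf, rfl⟩, _, hx, by simp⟩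

theorem Cosets.mul_left {F : Finset G} {x h : G} (hh : h ∈ H) (hx : x ∈ Cosets H F) :
    h * x ∈ Cosets H F := by
  obtain ⟨f, hf, hx⟩ := hx
  exact ⟨f, hf, by rw [mul_assoc]; exact H.mul_mem hh hx⟩

/-- If almost all positive powers of `s` lie in finitely many cosets of `H`, then two of them lie
in the same coset, so some positive power of `s` lies in `H`. -/
theorem pow_mem_of_cosets {F : Finset G} {s : G} {N : ℕ} (h : ∀ n ≥ N, s ^ n ∈ Cosets H F) :
    ∃ m : ℕ, 0 < m ∧ s ^ m ∈ H := by
  choose f hf using fun n : ℕ => h (N + n) (Nat.le_add_right _ _)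
  obtain ⟨i, j, hij, e⟩ := Finite.exists_ne_map_eq_of_infinite
    (fun n : ℕ => (⟨f n, (hf n).1⟩ : F))
  have e : f i = f j := by simpa using e
  wlog hlt : i < j generalizing i j
  · exact this j i hij.symm (by simp [e]) e.symm (by omega)
  refine ⟨j - i, by omega, ?_⟩
  have h1 := H.mul_mem (hf j).2 (H.inv_mem (hf i).2)
  rw [e] at h1
  have : s ^ (N + j) * (f j)⁻¹ * (s ^ (N + i) * (f j)⁻¹)⁻¹ = s ^ (N + j) * (s ^ (N + i))⁻¹ := by
    group
  rw [this, ← pow_sub _ (by omega)] at h1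
  convert h1 using 2; omega

end

namespace HalfSpace
variable {G : Type u} [Group G] {V : Type v} [MulAction G V] {H : Subgroup G} {A : Set V}

theorem halves_compl (A : Set V) : halves G Aᶜ = halves G A := by
  ext C
  refine exists_congr fun g => ?_
  rw [Set.smul_set_compl, compl_compl, or_comm]

theorem halves_smul (k : G) (A : Set V) : halves G (k • A) = halves G A := by
  ext C
  constructor
  · rintro ⟨g, h⟩
    exact ⟨g * k, by rwa [mul_smul]⟩
  · rintro ⟨g, h⟩
    exact ⟨g * k⁻¹, by rwa [mul_smul, inv_smul_smul]⟩

theorem smul_mem_halves {A C : Set V} (k : G) (h : C ∈ halves G A) : k • C ∈ halves G A := by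
  obtain ⟨g, h | h⟩ := h
  · exact ⟨k * g, Or.inl (by rw [h, mul_smul])⟩
  · exact ⟨k * g, Or.inr (by rw [h, mul_smul, Set.smul_set_compl])⟩

theorem compl_mem_halves {A C : Set V} (h : C ∈ halves G A) : Cᶜ ∈ halves G A := by
  obtain ⟨g, h | h⟩ := h
  · exact ⟨g, Or.inr (by rw [h])⟩
  · exact ⟨g, Or.inl (by rw [h, compl_compl])⟩

theorem self_mem_halves (A : Set V) : A ∈ halves G A := ⟨1, Or.inl (by simp)⟩

theorem compl (hA : HalfSpace H A) : HalfSpace H Aᶜ where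
  stab g := by rw [Set.smul_set_compl, compl_inj_iff, hA.stab]
  noinv g := by
    rw [Set.smul_set_compl, Ne, compl_inj_iff]; exact hA.noinv g
  nest g := by
    have := hA.nest g
    simp only [Set.smul_set_compl, Set.compl_subset_compl, compl_compl]
    rcases this with h | h | h | h
    · exact Or.inr (Or.inl h)
    · exact Or.inl h
    · exact Or.inr (Or.inr (Or.inr (Set.subset_compl_comm.1 h)))
    · exact Or.inr (Or.inr (Or.inl (Set.compl_subset_comm.1 h)))
  disc := by rw [halves_compl]; exact hA.disc
  fix := hA.fix
  desc₁ := by rw [halves_compl]; exact hA.desc₂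
  desc₂ := by rw [halves_compl, compl_compl]; exact hA.desc₁

theorem smul (hA : HalfSpace H A) (k : G) (hk : ∀ g, k⁻¹ * g * k ∈ H ↔ g ∈ H) :
    HalfSpace H (k • A) where
  stab g := by
    rw [← hk g, ← hA.stab, mul_smul, mul_smul, inv_smul_eq_iff]
  noinv g := by
    have := hA.noinv (k⁻¹ * g * k)
    rwa [mul_smul, mul_smul, Ne, inv_smul_eq_iff, Set.smul_set_compl] at this
  nest g := by
    have e : g • k • A = k • (k⁻¹ * g * k) • A := by
      simp only [mul_smul, smul_inv_smul]
    rw [← Set.smul_set_compl, e]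
    simpa only [Set.smul_set_subset_smul_set_iff] using hA.nest (k⁻¹ * g * k)
  disc := by rw [halves_smul]; exact hA.disc
  fix := by
    obtain ⟨a, ha⟩ := hA.fix
    exact ⟨a, ha⟩
  desc₁ := by
    obtain ⟨C, hC, h⟩ := hA.desc₁
    exact ⟨k • C, by rw [halves_smul]; exact smul_mem_halves k hC, by
      rw [ssubset_iff_subset_not_subset] at *; simpa using h⟩
  desc₂ := by
    obtain ⟨C, hC, h⟩ := hA.desc₂
    exact ⟨k • C, by rw [halves_smul]; exact smul_mem_halves k hC, by
      rw [← Set.smul_set_compl]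
      rw [ssubset_iff_subset_not_subset] at *; simpa using h⟩

theorem nonempty (hA : HalfSpace H A) : A.Nonempty := by
  obtain ⟨C, -, h⟩ := hA.desc₁
  obtain ⟨x, hx, -⟩ := Set.exists_of_ssubset h
  exact ⟨x, hx⟩

theorem strictAnti {s : G} (hs : s • A ⊂ A) : StrictAnti fun n : ℕ => s ^ n • A := by
  refine strictAnti_nat_of_succ_lt fun n => ?_
  simp only [pow_succ, mul_smul]
  change s ^ n • s • A ⊂ s ^ n • A
  rw [ssubset_iff_subset_not_subset] at *; simpa using hs

theorem ssubset_inv_smul {s : G} (hs : s • A ⊂ A) : A ⊂ s⁻¹ • A := by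
  rw [ssubset_iff_subset_not_subset, ← Set.smul_set_subset_smul_set_iff (a := s),
    ← Set.smul_set_subset_smul_set_iff (a := s) (A := s⁻¹ • A), smul_inv_smul]
  exact ssubset_iff_subset_not_subset.1 hs

theorem inv_smul_compl_ssubset {s : G} (hs : s • A ⊂ A) : s⁻¹ • Aᶜ ⊂ Aᶜ := by
  rw [Set.smul_set_compl]
  exact compl_lt_compl_iff_lt.2 (ssubset_inv_smul hs)

/-- If `s • A ⊂ A`, only finitely many of the nested sets `s ^ n • A` contain a given point, since
they would all separate it from a point outside `A`. -/
theorem eventually_notMem (hA : HalfSpace H A) {s : G} (hs : s • A ⊂ A) (x : V) :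
    ∃ N : ℕ, ∀ n ≥ N, (s ^ n)⁻¹ • x ∉ A := by
  have anti := strictAnti hs
  by_contra! hcon
  have hx : ∀ n : ℕ, x ∈ s ^ n • A := by
    intro n
    obtain ⟨m, hm, h⟩ := hcon n
    rw [← Set.mem_smul_set_iff_inv_smul_mem] at h
    exact anti.antitone hm h
  obtain ⟨y, hy⟩ := hA.compl.nonempty
  have hf := hA.disc x y
  refine (Set.infinite_range_of_injective anti.injective) (hf.subset ?_)
  rintro _ ⟨n, rfl⟩
  refine ⟨⟨_, Or.inl rfl⟩, hx n, fun h => hy ?_⟩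
  have := anti.antitone (Nat.zero_le n) h
  simpa using this

theorem eventually_mem (hA : HalfSpace H A) {s : G} (hs : s • A ⊂ A) (x : V) :
    ∃ N : ℕ, ∀ n ≥ N, s ^ n • x ∈ A := by
  obtain ⟨N, hN⟩ := hA.compl.eventually_notMem (inv_smul_compl_ssubset hs) x
  refine ⟨N, fun n hn => ?_⟩
  have := hN n hn
  simpa using this

theorem pow_notMem (hA : HalfSpace H A) {s : G} (hs : s • A ⊂ A) {m : ℕ} (hm : 0 < m) :
    s ^ m ∉ H := by
  intro h
  have := strictAnti hs hm
  simp only [(hA.stab _).2 h, pow_zero, one_smul] at this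
  exact lt_irrefl _ this

/-- A translation fixes no point. -/
theorem no_fixed (hA : HalfSpace H A) {s : G} (hs : s • A ⊂ A) (x : V) : s • x ≠ x := by
  intro h
  have h' : ∀ n : ℕ, s ^ n • x = x := fun n => by
    induction n with
    | zero => simp
    | succ n ih => rw [pow_succ, mul_smul, h, ih]
  obtain ⟨N, hN⟩ := hA.eventually_mem hs x
  obtain ⟨M, hM⟩ := hA.eventually_notMem hs x
  have a := hN N le_rfl
  have b := hM M le_rfl
  rw [h'] at a
  rw [inv_smul_eq_iff.2 (h' M).symm] at b
  exact b a

theorem exists_orbit (hA : HalfSpace H A) (x : V) : ∃ g : G, g • x ∈ A := by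
  by_contra! hcon
  obtain ⟨C, ⟨k, rfl | rfl⟩, h⟩ := hA.desc₁
  · obtain ⟨N, hN⟩ := hA.eventually_mem h x
    exact hcon _ (hN N le_rfl)
  · apply hcon 1
    apply h.subset
    rw [Set.mem_compl_iff, Set.mem_smul_set_iff_inv_smul_mem, one_smul]
    exact hcon _

theorem exists_orbit_halves (hA : HalfSpace H A) (x : V) {C : Set V} (hC : C ∈ halves G A) :
    ∃ g : G, g • x ∈ C := by
  obtain ⟨k, rfl | rfl⟩ := hC
  · obtain ⟨g, hg⟩ := hA.exists_orbit x
    exact ⟨k * g, by rw [mul_smul]; exact Set.smul_mem_smul_set hg⟩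
  · obtain ⟨g, hg⟩ := hA.compl.exists_orbit x
    exact ⟨k * g, by rw [mul_smul, ← Set.smul_set_compl]; exact Set.smul_mem_smul_set hg⟩

theorem desc_halves (hA : HalfSpace H A) {C : Set V} (hC : C ∈ halves G A) :
    ∃ D ∈ halves G A, D ⊂ C := by
  obtain ⟨k, rfl | rfl⟩ := hC
  · obtain ⟨D, hD, h⟩ := hA.desc₁
    exact ⟨k • D, smul_mem_halves k hD, by
      rw [ssubset_iff_subset_not_subset] at *; simpa using h⟩
  · obtain ⟨D, hD, h⟩ := hA.desc₂
    exact ⟨k • D, smul_mem_halves k hD, by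
      rw [← Set.smul_set_compl]
      rw [ssubset_iff_subset_not_subset] at *; simpa using h⟩

/-- `{g | g • x ∈ A}` is not small. Below `A` there is an infinite strictly descending chain of
half-spaces `C n` with empty intersection. The orbit points `p h q • x` with `h ∈ H` all stay
within a bounded number of half-spaces of `p • a`, where `a` is fixed by `H`, so each piece `pHq`
misses `C n` for large `n`, whereas every `C n` meets the orbit of `x`. -/
theorem not_small (hA : HalfSpace H A) (x : V) : ¬ IsSmall H {g : G | g • x ∈ A} := by
  rintro ⟨F, hF, hcov⟩
  choose! nxt hn1 hn2 using fun (C : Set V) (hC : C ∈ halves G A) => hA.desc_halves hC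
  let C : ℕ → Set V := fun n => nxt^[n] A
  have hC : ∀ n, C n ∈ halves G A := by
    intro n
    induction n with
    | zero => exact self_mem_halves A
    | succ n ih => simp only [C, Function.iterate_succ_apply']; exact hn1 _ ih
  have anti : StrictAnti C := by
    refine strictAnti_nat_of_succ_lt fun n => ?_
    simp only [C, Function.iterate_succ_apply']; exact hn2 _ (hC n)
  obtain ⟨a, ha⟩ := hA.fix
  obtain ⟨y, hy⟩ := hA.compl.nonempty
  have out : ∀ z : V, ∃ m, ∀ n ≥ m, z ∉ C n := by
    intro z
    by_contra! hcon
    refine (Set.infinite_range_of_injective anti.injective) ((hA.disc z y).subset ?_)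
    rintro _ ⟨n, rfl⟩
    obtain ⟨m, hm, hz⟩ := hcon n
    exact ⟨hC n, anti.antitone hm hz, fun h => hy (anti.antitone (Nat.zero_le n) h)⟩
  have key : ∀ p : G × G, ∃ N, ∀ n ≥ N, ∀ h ∈ H, (p.1 * h * p.2) • x ∉ C n := by
    rintro ⟨p, q⟩
    obtain ⟨m, hm⟩ := out (p • a)
    have hfin := hA.disc (q • x) a
    refine ⟨m + (hfin.toFinset.card), fun n hn h hh hmem => ?_⟩
    have hle : (Finset.Icc m n).card ≤ hfin.toFinset.card := by
      refine Finset.card_le_card_of_injOn (fun i => (p * h)⁻¹ • C i) ?_ ?_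
      · intro i hi
        simp only [Finset.coe_Icc, Set.mem_Icc] at hi
        simp only [Set.Finite.coe_toFinset, Set.mem_ofPred_eq]
        refine ⟨smul_mem_halves _ (hC i), ?_, ?_⟩
        · rw [Set.mem_smul_set_iff_inv_smul_mem, inv_inv, ← mul_smul]
          exact anti.antitone hi.2 hmem
        · rw [Set.mem_smul_set_iff_inv_smul_mem, inv_inv, mul_smul, ha h hh]
          exact hm i hi.1
      · intro i _ j _ e
        exact anti.injective (smul_left_cancel _ e)
    rw [Nat.card_Icc] at hle
    omega
  choose N hN using key
  obtain ⟨M, hM⟩ := (hF.image N).bddAbove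
  obtain ⟨g, hg⟩ := hA.exists_orbit_halves x (hC M)
  obtain ⟨p, hp, h, hh, rfl⟩ := hcov g (anti.antitone (Nat.zero_le M) hg)
  exact hN p M (hM ⟨p, hp, rfl⟩) h hh hg

end HalfSpace

/-! ### Almost equal half-spaces have equal stabilizers -/

/-- The sets `{g | g • x ∈ A}` and `{g | g • y ∈ B}` differ only inside the cosets `Hf`, `f ∈ F`;
that is, they are `H`-almost equal, with a recorded witness `F`. -/
def Close {G : Type u} [Group G] {V : Type v} {W : Type w} [MulAction G V] [MulAction G W]
    (H : Subgroup G) (F : Finset G) (A : Set V) (x : V) (B : Set W) (y : W) : Prop :=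
  ∀ g : G, ¬ (g • x ∈ A ↔ g • y ∈ B) → g ∈ Cosets H F

/-- The corner of the pair `(A, g • A)` given by the signs `s`, `t` is empty. They select `A` or
`Aᶜ`, and `g • A` or `(g • A)ᶜ`, with `true` standing for the set itself. -/
def EmptyCorner {G : Type u} [Group G] {V : Type v} [MulAction G V]
    (A : Set V) (g : G) (s t : Bool) : Prop :=
  ∀ x : V, ¬ ((x ∈ A ↔ s = true) ∧ (g⁻¹ • x ∈ A ↔ t = true))

namespace HalfSpace
variable {G : Type u} [Group G] {V : Type v} {W : Type w} [MulAction G V] [MulAction G W]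
  {H K : Subgroup G} {A : Set V} {B : Set W} {x : V} {y : W} {F : Finset G}

theorem _root_.Close.compl (h : Close H F A x B y) : Close H F Aᶜ x Bᶜ y := by
  intro g hg
  refine h g fun e => hg ?_
  simp only [Set.mem_compl_iff, e]

theorem smul_mem_iff (hA : HalfSpace H A) {h : G} (hh : h ∈ H) (z : V) : h • z ∈ A ↔ z ∈ A := by
  conv_lhs => rw [← (hA.stab h).2 hh]
  exact Set.smul_mem_smul_set_iff

theorem ssubset_of_notMem (hA : HalfSpace H A) {g : G} (hg : g ∉ H) (h : g • A ⊆ A) :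
    g • A ⊂ A :=
  lt_of_le_of_ne h fun e => hg ((hA.stab g).1 e)

theorem inv_smul_subset {g : G} (h : A ⊆ g • A) : g⁻¹ • A ⊆ A := by
  rwa [← Set.smul_set_subset_smul_set_iff (a := g), smul_inv_smul]

theorem inv_smul_subset_compl {g : G} (h : g • A ⊆ Aᶜ) : g⁻¹ • A ⊆ Aᶜ := by
  intro z hz h'
  rw [Set.mem_smul_set_iff_inv_smul_mem, inv_inv] at hz
  exact h (Set.smul_mem_smul_set h') hz

theorem smul_compl_subset {g : G} (h : Aᶜ ⊆ g • A) : g • Aᶜ ⊆ Aᶜᶜ := by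
  rw [compl_compl, Set.smul_set_compl]
  exact Set.compl_subset_comm.1 h

/-- As `{g | g • x ∈ A}` is invariant under `H` on the left, `{g | g • y ∈ B}` and its translate
by `h ∈ H` differ only inside the cosets `Hf`, `f ∈ F`. -/
theorem mem_cosets (hA : HalfSpace H A) (hF : Close H F A x B y) {h : G} (hh : h ∈ H) {g : G}
    (h1 : g • y ∈ B) (h2 : h⁻¹ • g • y ∉ B) :
    g ∈ Cosets H F := by
  by_cases hg : g • x ∈ A
  · have : h⁻¹ * g ∈ Cosets H F := by
      refine hF _ fun e => ?_
      rw [mul_smul, mul_smul, hA.smul_mem_iff (H.inv_mem hh)] at e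
      exact h2 (e.1 hg)
    simpa using Cosets.mul_left hh this
  · exact hF _ fun e => hg (e.2 h1)

theorem le_aux₄ (hA : HalfSpace H A) (hF : Close H F A x B y)
    {h : G} (hh : h ∈ H) (hs : h • B ⊆ Bᶜ) : False := by
  refine hA.not_small x ((small_cosets F).mono ?_)
  intro g hg
  by_cases hgy : g • y ∈ B
  · refine mem_cosets hA hF hh hgy fun h' => ?_
    rw [← Set.mem_smul_set_iff_inv_smul_mem] at h'
    exact hs h' hgy
  · exact hF _ fun e => hgy (e.1 hg)

theorem le_aux₁ (hA : HalfSpace H A) (hB : HalfSpace K B) (hF : Close H F A x B y)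
    {k : G} (hk : k ∈ K) (h : k • A ⊂ A) : False := by
  have hp : ∀ n : ℕ, k ^ n • y ∈ B ↔ y ∈ B := fun n => hB.smul_mem_iff (K.pow_mem hk n) y
  have hp' : ∀ n : ℕ, (k ^ n)⁻¹ • y ∈ B ↔ y ∈ B := fun n =>
    hB.smul_mem_iff (K.inv_mem (K.pow_mem hk n)) y
  by_cases hy : y ∈ B
  · obtain ⟨N, hN⟩ := hA.eventually_notMem h x
    obtain ⟨m, hm, hmH⟩ := pow_mem_of_cosets (H := H) (F := F) (s := k⁻¹) (N := N) (by
      intro n hn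
      rw [inv_pow]
      exact hF _ (by rw [hp']; exact fun e => hN n hn (e.2 hy)))
    rw [inv_pow, inv_mem_iff] at hmH
    exact hA.pow_notMem h hm hmH
  · obtain ⟨N, hN⟩ := hA.eventually_mem h x
    obtain ⟨m, hm, hmH⟩ := pow_mem_of_cosets (H := H) (F := F) (s := k) (N := N) (by
      intro n hn
      exact hF _ (by rw [hp]; exact fun e => hy (e.1 (hN n hn))))
    exact hA.pow_notMem h hm hmH

theorem le_aux₂ (hA : HalfSpace H A) (hB : HalfSpace K B) (hF : Close H F A x B y)
    {k : G} (hk : k ∈ K) (h : k • A ⊆ Aᶜ) : False := by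
  refine hA.not_small x (((small_cosets F).union ((small_cosets F).translate k⁻¹)).mono ?_)
  intro g hg
  by_cases hgy : g • y ∈ B
  · refine Or.inr (hF _ fun e => ?_)
    rw [mul_smul, mul_smul, hB.smul_mem_iff (K.inv_mem hk),
      ← Set.mem_smul_set_iff_inv_smul_mem] at e
    exact h (e.2 hgy) hg
  · exact Or.inl (hF _ fun e => hgy (e.1 hg))

/-- `K` stabilizes `B`, so `{g | g • x ∈ A}` and its left translates by `k ∈ K` are almost equal.
By nesting, `k ∉ H` would make `k` a translation along `A` or push `A` into its complement. -/
theorem le_left (hA : HalfSpace H A) (hB : HalfSpace K B) (hF : Close H F A x B y) :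
    K ≤ H := by
  intro k hk
  by_contra hkH
  rcases hA.nest k with h | h | h | h
  · exact le_aux₁ hA hB hF hk (hA.ssubset_of_notMem hkH h)
  · exact le_aux₁ hA hB hF (K.inv_mem hk)
      (hA.ssubset_of_notMem (by rwa [inv_mem_iff]) (inv_smul_subset h))
  · exact le_aux₂ hA hB hF hk h
  · exact le_aux₂ hA.compl hB.compl hF.compl hk (smul_compl_subset h)

theorem le_aux₃ (hA : HalfSpace H A) (hB : HalfSpace K B) (hF : Close H F A x B y)
    {h : G} (hh : h ∈ H) (hs : h • B ⊂ B) : False := by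
  refine hA.not_small x ((small_cosets F).mono ?_)
  intro g _
  obtain ⟨M, hM⟩ := hB.eventually_notMem hs (g • y)
  have hM := hM M le_rfl
  obtain ⟨N, hN⟩ := hB.eventually_mem hs ((h ^ M)⁻¹ • g • y)
  classical
  have ex : ∃ j : ℕ, h ^ j • (h ^ M)⁻¹ • g • y ∈ B := ⟨N, hN N le_rfl⟩
  have h1 := Nat.find_spec ex
  have h2 : ∀ i < Nat.find ex, _ := fun i hi => Nat.find_min ex hi
  generalize Nat.find ex = j at h1 h2
  obtain _ | j := j
  · simp only [pow_zero, one_smul] at h1; exact (hM h1).elim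
  · have h3 := h2 j (Nat.lt_succ_self j)
    have := mem_cosets hA hF hh (g := h ^ (j + 1) * (h ^ M)⁻¹ * g)
      (by simpa only [mul_smul] using h1)
      (by
        rw [pow_succ']
        simpa only [mul_smul, inv_smul_smul] using h3)
    have := Cosets.mul_left (H.inv_mem (H.mul_mem (H.pow_mem hh (j + 1))
      (H.inv_mem (H.pow_mem hh M)))) this
    rwa [inv_mul_cancel_left] at this

theorem le_right (hA : HalfSpace H A) (hB : HalfSpace K B) (hF : Close H F A x B y) :
    H ≤ K := by
  intro k hk
  by_contra hkH
  rcases hB.nest k with h | h | h | h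
  · exact le_aux₃ hA hB hF hk (hB.ssubset_of_notMem hkH h)
  · exact le_aux₃ hA hB hF (H.inv_mem hk)
      (hB.ssubset_of_notMem (by rwa [inv_mem_iff]) (inv_smul_subset h))
  · exact le_aux₄ hA hF hk h
  · exact le_aux₄ hA.compl hF.compl hk (smul_compl_subset h)

/-- A side of an edge with stabilizer `K` does not give an `H`-finite set either, although `H` is
the stabilizer of an unrelated half-space `A`. If any two points of the orbit of `y` lie in a
common translate of `B`, then `H`-finiteness of `{g | g • y ∈ B}` would make all of `G` small.
Otherwise a translation `k` along `B` gives arbitrarily many translates of `B` separating two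
fixed points, and if there is no translation, `Bᶜ` has a translate inside `B` and again all of `G`
would be small. -/
theorem not_hFinite (hA : HalfSpace H A) (hB : HalfSpace K B) (x : V) (y : W) (F : Finset G) :
    ¬ {g : G | g • y ∈ B} ⊆ Cosets H F := by
  intro hY
  by_cases hc : ∀ g : G, ∃ c : G, y ∈ c • B ∧ g • y ∈ c • B
  · refine hA.not_small x (IsSmall.mono (T := Set.univ) ?_ (Set.subset_univ _))
    refine ⟨(fun p : G × G => (p.1⁻¹, p.2)) '' (F ×ˢ F : Finset (G × G)),
      (Finset.finite_toSet _).image _, fun g _ => ?_⟩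
    obtain ⟨c, h1, h2⟩ := hc g
    rw [Set.mem_smul_set_iff_inv_smul_mem] at h1 h2
    obtain ⟨f, hf, hf'⟩ := hY h1
    obtain ⟨e, he, he'⟩ := hY (show c⁻¹ * g ∈ _ by
      change (c⁻¹ * g) • y ∈ B
      rwa [mul_smul])
    refine ⟨_, ⟨(f, e), by simpa using ⟨hf, he⟩, rfl⟩, _, H.mul_mem (H.inv_mem hf') he', ?_⟩
    simp only
    group
  · push Not at hc
    obtain ⟨g, hg⟩ := hc
    obtain ⟨C, ⟨k, rfl | rfl⟩, hk⟩ := hB.desc₁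
    · -- all translates of `B` containing `y` separate it from `g • y`
      have hfin := hB.disc y (g • y)
      have anti := strictAnti hk
      obtain ⟨z, hz⟩ := hB.exists_orbit y
      set n := hfin.toFinset.card with hn
      have hle : (Finset.range (n + 1)).card ≤ hfin.toFinset.card := by
        refine Finset.card_le_card_of_injOn (fun i => (k ^ n * z)⁻¹ • k ^ i • B) ?_ ?_
        · intro i hi
          simp only [Finset.coe_range, Set.mem_Iio] at hi
          simp only [Set.Finite.coe_toFinset, Set.mem_ofPred_eq]
          have : y ∈ (k ^ n * z)⁻¹ • k ^ i • B := by
            rw [Set.mem_smul_set_iff_inv_smul_mem, inv_inv, mul_smul]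
            exact anti.antitone (Nat.le_of_lt_succ hi) (Set.smul_mem_smul_set hz)
          refine ⟨smul_mem_halves _ ⟨_, Or.inl rfl⟩, this, ?_⟩
          rw [← mul_smul] at this ⊢
          exact hg _ this
        · intro i _ j _ e
          exact anti.injective (smul_left_cancel _ e)
      rw [Finset.card_range] at hle
      omega
    · refine hA.not_small x (IsSmall.mono (T := Set.univ) ?_ (Set.subset_univ _))
      refine ((small_cosets (H := H) F).union ((small_cosets F).translate k)).mono ?_
      intro g _
      by_cases hgy : g • y ∈ B
      · exact Or.inl (hY hgy)
      · refine Or.inr (hY ?_)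
        change (k * g) • y ∈ B
        apply hk.subset
        rw [← Set.smul_set_compl, mul_smul]
        exact Set.smul_mem_smul_set hgy

end HalfSpace

/-! ### Comparing the nesting of two half-spaces -/

/-- `g` disproves that `A` and `B` are arranged alike: `A` and `g • A` are disjoint whereas `B`
and `g • B` cover everything. For almost equal sets this is the only way, up to complementing
both, in which the nesting of the translates of `A` and of `B` can disagree. -/
def Bad {G : Type u} [Group G] {V : Type v} {W : Type w} [MulAction G V] [MulAction G W]
    (A : Set V) (B : Set W) (g : G) : Prop :=
  g • A ⊆ Aᶜ ∧ Bᶜ ⊆ g • B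

section
variable {G : Type u} [Group G] {H : Subgroup G}

/-- A set that is not `H`-finite contains arbitrarily many elements in distinct right cosets of
`H`. -/
theorem exists_indep {S : Set G} (hS : ∀ F, ¬ S ⊆ Cosets H F) (n : ℕ) :
    ∃ Z : Finset G, Z.card = n ∧ (Z : Set G) ⊆ S ∧
      ∀ z ∈ Z, ∀ z' ∈ Z, z * z'⁻¹ ∈ H → z = z' := by
  classical
  induction n with
  | zero => exact ⟨∅, by simp⟩
  | succ n ih =>
    obtain ⟨Z, hc, hZ, hi⟩ := ih
    obtain ⟨z, hz, hzZ⟩ := Set.not_subset.1 (hS Z)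
    have hno : ∀ z' ∈ Z, z * z'⁻¹ ∉ H := fun z' hz' h => hzZ ⟨z', hz', h⟩
    refine ⟨insert z Z, ?_, ?_, ?_⟩
    · rw [Finset.card_insert_of_notMem, hc]
      intro h; exact hno z h (by simp)
    · rw [Finset.coe_insert]; exact Set.insert_subset hz hZ
    · intro p hp q hq h
      rw [Finset.mem_insert] at hp hq
      rcases hp with rfl | hp <;> rcases hq with rfl | hq
      · rfl
      · exact (hno _ hq h).elim
      · refine (hno _ hp ?_).elim
        have := H.inv_mem h
        simpa using this
      · exact hi p hp q hq h

theorem card_le_of_indep {Z F : Finset G} (hi : ∀ z ∈ Z, ∀ z' ∈ Z, z * z'⁻¹ ∈ H → z = z')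
    (h : (Z : Set G) ⊆ Cosets H F) : Z.card ≤ F.card := by
  choose! f hf hf' using h
  refine Finset.card_le_card_of_injOn f (fun z hz => hf hz) fun z hz z' hz' e => ?_
  refine hi z hz z' hz' ?_
  have := H.mul_mem (hf' hz) (H.inv_mem (hf' hz'))
  rw [e] at this
  convert this using 1
  group

end

namespace EmptyCorner
variable {G : Type u} [Group G] {V : Type v} [MulAction G V] {A : Set V} {g : G}

theorem tt : EmptyCorner A g true true ↔ g • A ⊆ Aᶜ := by
  simp only [EmptyCorner, Set.subset_def, Set.mem_smul_set_iff_inv_smul_mem, Set.mem_compl_iff]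
  grind

theorem ff : EmptyCorner A g false false ↔ Aᶜ ⊆ g • A := by
  simp only [EmptyCorner, Set.subset_def, Set.mem_smul_set_iff_inv_smul_mem, Set.mem_compl_iff]
  grind

theorem ft : EmptyCorner A g false true ↔ g • A ⊆ A := by
  simp only [EmptyCorner, Set.subset_def, Set.mem_smul_set_iff_inv_smul_mem]
  grind

theorem tf : EmptyCorner A g true false ↔ A ⊆ g • A := by
  simp only [EmptyCorner, Set.subset_def, Set.mem_smul_set_iff_inv_smul_mem]
  grind

end EmptyCorner

namespace HalfSpace
variable {G : Type u} [Group G] {V : Type v} {W : Type w} [MulAction G V] [MulAction G W]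
  {H : Subgroup G} {A : Set V} {B : Set W} {x : V} {y : W} {F : Finset G}

theorem exists_emptyCorner (hA : HalfSpace H A) (g : G) : ∃ s t, EmptyCorner A g s t := by
  rcases hA.nest g with h | h | h | h
  · exact ⟨_, _, EmptyCorner.ft.2 h⟩
  · exact ⟨_, _, EmptyCorner.tf.2 h⟩
  · exact ⟨_, _, EmptyCorner.tt.2 h⟩
  · exact ⟨_, _, EmptyCorner.ff.2 h⟩

theorem not_small_sign (hA : HalfSpace H A) (x : V) (s : Bool) :
    ¬ IsSmall H {g : G | g • x ∈ A ↔ s = true} := by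
  cases s
  · simpa using hA.compl.not_small x
  · simpa using hA.not_small x

/-- An empty corner for `A` gives a small corner for `B`. -/
theorem transfer (hF : Close H F A x B y) {u : G} {s t : Bool} (h : EmptyCorner A u s t) :
    IsSmall H {g : G | (g • y ∈ B ↔ s = true) ∧ (u⁻¹ • g • y ∈ B ↔ t = true)} := by
  refine ((small_cosets F).union ((small_cosets F).translate u⁻¹)).mono ?_
  rintro g ⟨h1, h2⟩
  by_contra hcon
  rw [Set.mem_union, not_or] at hcon
  have e1 : g • x ∈ A ↔ g • y ∈ B := by
    by_contra hc; exact hcon.1 (hF _ hc)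
  have e2 : (u⁻¹ * g) • x ∈ A ↔ (u⁻¹ * g) • y ∈ B := by
    by_contra hc; exact hcon.2 (hF _ hc)
  rw [mul_smul, mul_smul] at e2
  exact h (g • x) ⟨e1.trans h1, e2.trans h2⟩

/-- An element cannot translate `A` inwards and `B` outwards. -/
theorem opposite (hA : HalfSpace H A) (hB : HalfSpace H B) (hF : Close H F A x B y) {u : G}
    (h1 : u • A ⊂ A) (h2 : u⁻¹ • B ⊂ B) : False := by
  obtain ⟨N, hN⟩ := hA.eventually_mem h1 x
  obtain ⟨M, hM⟩ := hB.eventually_notMem h2 y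
  obtain ⟨m, hm, hmH⟩ := pow_mem_of_cosets (H := H) (F := F) (s := u) (N := max N M) (by
    intro n hn
    refine hF _ fun e => ?_
    have := hM n (le_of_max_le_right hn)
    rw [inv_pow, inv_inv] at this
    exact this (e.1 (hN n (le_of_max_le_left hn))))
  exact hA.pow_notMem h1 hm hmH

/-- For `u ∉ H`, the empty corners of `(A, u • A)` and `(B, u • B)` agree or are opposite, and in
the second case they are those of a pair as in `Bad`. Adjacent corners are impossible, as then two
adjacent corners of `(B, u • B)`, hence a half-space, would be small. -/
theorem emptyCorner_class (hA : HalfSpace H A) (hB : HalfSpace H B) (hF : Close H F A x B y)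
    {u : G} (hu : u ∉ H) {s t s' t' : Bool} (h1 : EmptyCorner A u s t)
    (h2 : EmptyCorner B u s' t') :
    (s' = s ∧ t' = t) ∨ (s' = !s ∧ t' = !t ∧ s = t) := by
  have hu' : u⁻¹ ∉ H := by rwa [inv_mem_iff]
  have hs := transfer hF h1
  by_cases es : s' = s <;> by_cases et : t' = t
  · exact Or.inl ⟨es, et⟩
  · exfalso
    refine hB.not_small_sign y s (hs.mono fun g hg => ⟨hg, ?_⟩)
    have := h2 (g • y)
    simp only [Set.mem_ofPred_eq] at hg
    grind
  · exfalso
    refine hB.not_small_sign y t ((hs.translate u).mono fun g hg => ?_)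
    have := h2 ((u * g) • y)
    simp only [Set.mem_ofPred_eq] at hg
    simp only [Set.mem_ofPred_eq]
    rw [mul_smul, inv_smul_smul] at *
    grind
  · have es' : s' = !s := Bool.eq_not.2 es
    have et' : t' = !t := Bool.eq_not.2 et
    subst es' et'
    refine Or.inr ⟨rfl, rfl, ?_⟩
    cases s <;> cases t
    · rfl
    · exfalso
      rw [EmptyCorner.ft] at h1
      replace h2 := EmptyCorner.tf.1 h2
      exact opposite hA hB hF (hA.ssubset_of_notMem hu h1)
        (hB.ssubset_of_notMem hu' (inv_smul_subset h2))
    · exfalso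
      rw [EmptyCorner.tf] at h1
      replace h2 := EmptyCorner.ft.1 h2
      exact opposite hA hB hF (hA.ssubset_of_notMem hu' (inv_smul_subset h1))
        (by rw [inv_inv]; exact hB.ssubset_of_notMem hu h2)
    · rfl

theorem emptyCorner_of_mem (hA : HalfSpace H A) {u : G} (hu : u ∈ H) (s t : Bool) :
    EmptyCorner A u s t ↔ s ≠ t := by
  obtain ⟨p, hp⟩ := hA.nonempty
  obtain ⟨q, hq⟩ := hA.compl.nonempty
  rw [Set.mem_compl_iff] at hq
  simp only [EmptyCorner, hA.smul_mem_iff (H.inv_mem hu)]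
  constructor
  · rintro h rfl
    have h1 := h p
    have h2 := h q
    cases s <;> simp_all
  · intro h z hz
    cases s <;> cases t <;> simp_all

/-- In the absence of bad elements, the translates of `A` and those of `B` are nested in the same
way. -/
theorem emptyCorner_iff (hA : HalfSpace H A) (hB : HalfSpace H B) (hF : Close H F A x B y)
    (h1 : ∀ g : G, ¬ Bad A B g) (h2 : ∀ g : G, ¬ Bad Aᶜ Bᶜ g) (u : G) (s t : Bool) :
    EmptyCorner A u s t ↔ EmptyCorner B u s t := by
  by_cases hu : u ∈ H
  · rw [hA.emptyCorner_of_mem hu, hB.emptyCorner_of_mem hu]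
  have key : ∀ s, EmptyCorner A u s s → ¬ EmptyCorner B u (!s) (!s) := by
    intro s h h'
    cases s
    · refine h2 u ⟨smul_compl_subset (EmptyCorner.ff.1 h), ?_⟩
      have := EmptyCorner.tt.1 h'
      rw [compl_compl, Set.smul_set_compl]
      exact Set.subset_compl_comm.1 this
    · exact h1 u ⟨EmptyCorner.tt.1 h, EmptyCorner.ff.1 h'⟩
  constructor
  · intro h
    obtain ⟨s', t', h'⟩ := hB.exists_emptyCorner u
    rcases emptyCorner_class hA hB hF hu h h' with ⟨rfl, rfl⟩ | ⟨rfl, rfl, rfl⟩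
    · exact h'
    · exact (key _ h h').elim
  · intro h
    obtain ⟨s', t', h'⟩ := hA.exists_emptyCorner u
    rcases emptyCorner_class hA hB hF hu h' h with ⟨rfl, rfl⟩ | ⟨rfl, rfl, rfl⟩
    · exact h'
    · exact (key _ h' h).elim

end HalfSpace

/-! ### Removing bad elements -/

namespace HalfSpace
variable {G : Type u} [Group G] {V : Type v} {W : Type w} [MulAction G V] [MulAction G W]
  {H : Subgroup G} {A : Set V} {B : Set W} {x : V} {y : W} {F : Finset G}

theorem _root_.Bad.inv {g : G} (h : Bad A B g) : Bad A B g⁻¹ := by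
  refine ⟨inv_smul_subset_compl h.1, fun z hz => ?_⟩
  rw [Set.mem_smul_set_iff_inv_smul_mem, inv_inv]
  by_contra hc
  exact hz (Set.smul_mem_smul_set_iff.1 (h.2 hc))

theorem _root_.Bad.mono {C : Set V} {g : G} (h : Bad C B g) (hAC : A ⊆ C) : Bad A B g :=
  ⟨(Set.smul_set_mono hAC).trans (h.1.trans (Set.compl_subset_compl.2 hAC)), h.2⟩

theorem bad_corner (hF : Close H F A x B y) {g : G} (h : Bad A B g) {z : G}
    (h1 : z • x ∉ A) (h2 : g⁻¹ • z • x ∉ A) : z ∈ Cosets H F ∨ g⁻¹ * z ∈ Cosets H F := by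
  by_cases hz : z • y ∈ B
  · exact Or.inl (hF _ fun e => h1 (e.2 hz))
  · have := h.2 hz
    rw [Set.mem_smul_set_iff_inv_smul_mem] at this
    refine Or.inr (hF _ fun e => h2 ?_)
    rw [mul_smul, mul_smul] at e
    exact e.2 this

/-- If `g` is bad, the part of the orbit outside `A ∪ g • A` is small, so every translate of `A`
disjoint from `A` is comparable with `g • A`. -/
theorem bad_chain (hA : HalfSpace H A) (hF : Close H F A x B y) {g w : G} (h : Bad A B g)
    (hw : w • A ⊆ Aᶜ) : g • A ⊆ w • A ∨ w • A ⊆ g • A := by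
  have e : w • A = g • (g⁻¹ * w) • A := by rw [← mul_smul, mul_inv_cancel_left]
  rcases hA.nest (g⁻¹ * w) with h' | h' | h' | h'
  · right; rw [e]; exact Set.smul_set_mono h'
  · left; rw [e]; exact Set.smul_set_mono h'
  · exfalso
    have hd : w • A ⊆ (g • A)ᶜ := by
      rw [e, ← Set.smul_set_compl]; exact Set.smul_set_mono h'
    refine hA.not_small x ((((small_cosets F).union
      ((small_cosets F).translate g⁻¹)).translate w).mono ?_)
    intro z hz
    have hz' : (w * z) • x ∈ w • A := by rw [mul_smul]; exact Set.smul_mem_smul_set hz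
    refine bad_corner hF h (hw hz') ?_
    rw [← Set.mem_smul_set_iff_inv_smul_mem]
    exact hd hz'
  · exfalso
    have hd : (g • A)ᶜ ⊆ w • A := by
      rw [e, ← Set.smul_set_compl]; exact Set.smul_set_mono h'
    obtain ⟨p, hp⟩ := hA.nonempty
    exact hw (hd fun hc => h.1 hc hp) hp

/-- A bad `g` normalizes `H`: for `k ∈ H` the translates `g • A` and `k • g • A` are comparable,
and `g⁻¹ * k * g` is not a translation along `A` because it has a fixed point. -/
theorem bad_norm_aux (hA : HalfSpace H A) (hF : Close H F A x B y) {g : G} (h : Bad A B g)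
    {k : G} (hk : k ∈ H) : g⁻¹ * k * g ∈ H := by
  by_contra hv
  have e : (k * g) • A = g • (g⁻¹ * k * g) • A := by
    rw [← mul_smul]; congr 1; group
  have hw : (k * g) • A ⊆ Aᶜ := by
    rw [mul_smul, ← (hA.stab k).2 hk, ← Set.smul_set_compl, (hA.stab k).2 hk]
    exact Set.smul_set_mono h.1
  obtain ⟨a, ha⟩ := hA.fix
  have hfix : (g⁻¹ * k * g) • g⁻¹ • a = g⁻¹ • a := by
    rw [← mul_smul, mul_inv_cancel_right, mul_smul, ha k hk]
  rcases bad_chain hA hF h hw with h' | h'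
  · rw [e, Set.smul_set_subset_smul_set_iff] at h'
    refine hA.no_fixed (hA.ssubset_of_notMem (by rwa [inv_mem_iff]) (inv_smul_subset h'))
      (g⁻¹ • a) ?_
    rw [inv_smul_eq_iff, hfix]
  · rw [e, Set.smul_set_subset_smul_set_iff] at h'
    exact hA.no_fixed (hA.ssubset_of_notMem hv h') (g⁻¹ • a) hfix

theorem bad_norm (hA : HalfSpace H A) (hF : Close H F A x B y) {g : G} (h : Bad A B g) (k : G) :
    g⁻¹ * k * g ∈ H ↔ k ∈ H := by
  refine ⟨fun hk => ?_, bad_norm_aux hA hF h⟩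
  have := bad_norm_aux hA hF h.inv hk
  convert this using 1
  group

/-- An element moving `A` off itself cannot have a square that is a translation along `A`. -/
theorem bad_sq_aux (hA : HalfSpace H A) {g : G} (h : g • A ⊆ Aᶜ) (hs : (g * g) • A ⊂ A) :
    False := by
  obtain ⟨p, hp⟩ := hA.nonempty
  obtain ⟨N, hN⟩ := hA.eventually_mem hs (g • p)
  have h1 := hN N le_rfl
  have h2 : (g * g) ^ N • p ∈ A := by
    have := (strictAnti hs).antitone (Nat.zero_le N) (Set.smul_mem_smul_set hp)
    simpa using this
  refine h (Set.smul_mem_smul_set h2) ?_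
  convert h1 using 1
  rw [← mul_smul, ← mul_smul]
  congr 1
  exact ((Commute.refl g).mul_right (Commute.refl g)).pow_right N

theorem bad_sq (hA : HalfSpace H A) (hF : Close H F A x B y) {g : G} (h : Bad A B g) :
    g * g ∈ H := by
  by_contra hs
  have e : g • A = g⁻¹ • (g * g) • A := by rw [← mul_smul, inv_mul_cancel_left]
  rcases bad_chain hA hF h h.inv.1 with h' | h'
  · rw [e, Set.smul_set_subset_smul_set_iff] at h'
    exact bad_sq_aux hA h.1 (hA.ssubset_of_notMem hs h')
  · rw [e, Set.smul_set_subset_smul_set_iff] at h'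
    refine bad_sq_aux hA h.inv.1 ?_
    rw [← mul_inv_rev]
    exact hA.ssubset_of_notMem (by rwa [inv_mem_iff]) (inv_smul_subset h')

theorem bad_corner_cosets [DecidableEq G] (hA : HalfSpace H A) (hF : Close H F A x B y) {g : G}
    (h : Bad A B g) {z : G} (h1 : z • x ∉ A) (h2 : g⁻¹ • z • x ∉ A) :
    z ∈ Cosets H (F ∪ F.image (g * ·)) := by
  rcases bad_corner hF h h1 h2 with ⟨f, hf, h'⟩ | ⟨f, hf, h'⟩
  · exact ⟨f, Finset.mem_union_left _ hf, h'⟩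
  · refine ⟨g * f, Finset.mem_union_right _ (Finset.mem_image_of_mem _ hf), ?_⟩
    have := bad_norm_aux hA hF h.inv h'
    convert this using 1
    group

/-- For a bad `g`, the half-space `(g • A)ᶜ ⊇ A` has the same stabilizer `H` and is again close to
`B`. -/
theorem bad_flip (hA : HalfSpace H A) (hF : Close H F A x B y) {g : G} (h : Bad A B g) :
    HalfSpace H (g • A)ᶜ ∧ ∃ F', Close H F' (g • A)ᶜ x B y := by
  classical
  refine ⟨(hA.smul g (bad_norm hA hF h)).compl, F ∪ F.image (g * ·), fun z hz => ?_⟩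
  have hsub : ∀ {z}, z ∈ Cosets H F → z ∈ Cosets H (F ∪ F.image (g * ·)) := by
    rintro z ⟨f, hf, h'⟩
    exact ⟨f, Finset.mem_union_left _ hf, h'⟩
  by_cases h1 : z • x ∈ g • A
  · have h2 := h.1 h1
    exact hsub (hF z fun e => hz ⟨fun h => (h h1).elim, fun h => (h2 (e.2 h)).elim⟩)
  · have hy : z • y ∉ B := fun h' => hz ⟨fun _ => h', fun _ => h1⟩
    by_cases h2 : z • x ∈ A
    · exact hsub (hF z fun e => hy (e.1 h2))
    · refine bad_corner_cosets hA hF h h2 ?_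
      rwa [← Set.mem_smul_set_iff_inv_smul_mem]

theorem halves_eq {C : Set V} (hC : C ∈ halves G A) : halves G C = halves G A := by
  obtain ⟨g, rfl | rfl⟩ := hC
  · rw [halves_smul]
  · rw [halves_compl, halves_smul]

/-- Among the half-spaces containing `A`, close to `B` and admitting bad elements, there is a
maximal one; in fact there are only finitely many. Take `2|F| + 1` elements `z` in distinct cosets
with `z • x ∉ A`. If `h` is bad for `C ⊇ A`, the elements `z` with `z • x ∈ C` and `z • x ∉ A` lie
in `2|F|` cosets, so `C` separates `A` from one of the finitely many points `z • x`. -/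
theorem exists_maximal_bad (hA : HalfSpace H A) (hF : Close H F A x B y) {g₀ : G}
    (h₀ : Bad A B g₀) :
    ∃ C, Maximal (fun C => C ∈ halves G A ∧ A ⊆ C ∧ HalfSpace H C ∧
      (∃ F', Close H F' C x B y) ∧ ∃ g : G, Bad C B g) C := by
  classical
  set 𝒮 : Set (Set V) := {C | C ∈ halves G A ∧ A ⊆ C ∧ HalfSpace H C ∧
      (∃ F', Close H F' C x B y) ∧ ∃ g : G, Bad C B g} with h𝒮
  obtain ⟨p, hp⟩ := hA.nonempty
  obtain ⟨Z, hZc, hZ, hi⟩ := exists_indep (H := H) (S := {z | z • x ∈ Aᶜ})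
    (fun F h => hA.compl.not_small x ((small_cosets F).mono h)) (2 * F.card + 1)
  have hfin : 𝒮.Finite := by
    refine (Set.Finite.biUnion Z.finite_toSet fun z _ => hA.disc p (z • x)).subset ?_
    rintro C ⟨hC, hAC, -, -, h, hh⟩
    by_contra hcon
    have hall : ∀ z ∈ Z, z • x ∈ C := by
      intro z hz
      by_contra hc
      exact hcon (Set.mem_biUnion hz ⟨hC, hAC hp, hc⟩)
    have := card_le_of_indep hi (F := F ∪ F.image (h * ·)) fun z hz => by
      refine bad_corner_cosets hA hF (hh.mono hAC) (hZ hz) fun hc => ?_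
      refine hh.1 ?_ (hall z hz)
      rw [Set.mem_smul_set_iff_inv_smul_mem]
      exact hAC hc
    have h1 := Finset.card_union_le F (F.image (h * ·))
    have h2 := Finset.card_image_le (s := F) (f := (h * ·))
    omega
  exact hfin.exists_maximal ⟨A, self_mem_halves A, subset_rfl, hA, ⟨F, hF⟩, g₀, h₀⟩

/-- The sets `g • A` for bad `g` form a chain by `bad_chain`; it has a largest element because all
its members are disjoint from `A`. -/
theorem exists_closest_bad (hA : HalfSpace H A) (hF : Close H F A x B y) {g₀ : G}
    (h₀ : Bad A B g₀) : ∃ g : G, Bad A B g ∧ ∀ h : G, Bad A B h → h • A ⊆ g • A := by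
  obtain ⟨p, hp⟩ := hA.nonempty
  have hfin : {D : Set V | ∃ g : G, Bad A B g ∧ D = g • A ∧ g₀ • A ⊆ D}.Finite := by
    refine (hA.disc (g₀ • p) p).subset ?_
    rintro _ ⟨g, hg, rfl, h⟩
    exact ⟨⟨g, Or.inl rfl⟩, h (Set.smul_mem_smul_set hp), fun h => hg.1 h hp⟩
  obtain ⟨_, ⟨g, hg, rfl, h'⟩, hmax⟩ := hfin.exists_maximal ⟨_, g₀, h₀, rfl, subset_rfl⟩
  refine ⟨g, hg, fun h hh => ?_⟩
  rcases bad_chain hA hF hg hh.1 with h1 | h1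
  · exact hmax ⟨h, hh, rfl, h'.trans h1⟩ h1
  · exact h1

/-- If there are bad elements, replace `A` by a maximal `C` as in `exists_maximal_bad`, and then
by `(g • C)ᶜ` with `g • C` closest to `C`. By maximality this has no bad elements of the first
kind. One of the second kind, `h`, would make `g⁻¹ * h * g` bad for `C`; comparing its translate
with the closest one gives `h * g ∈ H`, and this contradicts the nesting of the translates of `B`.
-/
theorem exists_good_of_bad (hA : HalfSpace H A) (hB : HalfSpace H B) (hF : Close H F A x B y)
    {g₀ : G} (h₀ : Bad A B g₀) :
    ∃ C ∈ halves G A, HalfSpace H C ∧ (∃ F', Close H F' C x B y) ∧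
      (∀ g : G, ¬ Bad C B g) ∧ ∀ g : G, ¬ Bad Cᶜ Bᶜ g := by
  obtain ⟨C, ⟨hC, hAC, hCH, ⟨F₁, hF₁⟩, g₁, hg₁⟩, hmax⟩ := exists_maximal_bad hA hF h₀
  obtain ⟨g, hg, hclose⟩ := exists_closest_bad hCH hF₁ hg₁
  obtain ⟨hC'H, F₂, hF₂⟩ := bad_flip hCH hF₁ hg
  have hgg := bad_sq hCH hF₁ hg
  have hC' : (g • C)ᶜ ∈ halves G A := compl_mem_halves (smul_mem_halves g hC)
  have hCC' : C ⊆ (g • C)ᶜ := Set.subset_compl_comm.1 hg.1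
  refine ⟨_, hC', hC'H, ⟨F₂, hF₂⟩, fun k hk => ?_, fun h hh => ?_⟩
  · have := hmax ⟨hC', hAC.trans hCC', hC'H, ⟨F₂, hF₂⟩, k, hk⟩ hCC'
    refine hCH.noinv g (hg.1.antisymm ?_)
    exact Set.compl_subset_comm.1 this
  · obtain ⟨hh1, hh2⟩ := hh
    rw [compl_compl] at hh1
    rw [compl_compl] at hh2
    have hhB : h • B ⊆ Bᶜ := by
      rw [Set.smul_set_compl] at hh2
      exact Set.subset_compl_comm.1 hh2
    have hu : g⁻¹ * h ∉ H := by
      intro hu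
      have e : h • B = g • B := by
        have := (hB.stab _).2 hu
        rwa [mul_smul, inv_smul_eq_iff] at this
      exact hB.noinv h (hhB.antisymm (e ▸ hg.2))
    have huB : (g⁻¹ * h) • B ⊆ B := by
      rw [mul_smul, ← Set.smul_set_subset_smul_set_iff (a := g), smul_inv_smul]
      exact hhB.trans hg.2
    have huC : (g⁻¹ * h) • (g • C)ᶜ ⊆ (g • C)ᶜ := by
      obtain ⟨s, t, hst⟩ := hC'H.exists_emptyCorner (g⁻¹ * h)
      rcases emptyCorner_class hC'H hB hF₂ hu hst (EmptyCorner.ft.2 huB) with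
        ⟨rfl, rfl⟩ | ⟨e1, e2, rfl⟩
      · exact EmptyCorner.ft.1 hst
      · rw [← e1] at e2; cases e2
    have hgC : g • g • C = C := by rw [← mul_smul]; exact (hCH.stab _).2 hgg
    have h1 : C ⊆ (h * g) • C := by
      rw [Set.smul_set_compl, Set.compl_subset_compl, mul_smul,
        ← Set.smul_set_subset_smul_set_iff (a := g), smul_inv_smul, hgC, ← mul_smul] at huC
      exact huC
    have hbad : Bad C B (g⁻¹ * h * g) := by
      constructor
      · rw [mul_smul, mul_smul, ← Set.smul_set_subset_smul_set_iff (a := g), smul_inv_smul,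
          Set.smul_set_compl]
        exact hh1
      · refine hg.inv.2.trans ?_
        rw [mul_smul, mul_smul]
        refine Set.smul_set_mono (hh2.trans (Set.smul_set_mono hg.2))
    have h2 : (h * g) • C ⊆ C := by
      have := hclose _ hbad
      rw [← Set.smul_set_subset_smul_set_iff (a := g), hgC, ← mul_smul, mul_assoc,
        mul_inv_cancel_left] at this
      exact this
    have h3 : h * g ∈ H := (hCH.stab _).1 (h2.antisymm h1)
    apply hu
    have := H.mul_mem ((bad_norm hCH hF₁ hg _).2 h3) (H.inv_mem hgg)
    convert this using 1
    group

/-- After replacing `A` by another half-space with the same stabilizer, no bad elements of either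
kind are left. -/
theorem exists_good (hA : HalfSpace H A) (hB : HalfSpace H B) (hF : Close H F A x B y) :
    ∃ C ∈ halves G A, HalfSpace H C ∧ (∃ F', Close H F' C x B y) ∧
      (∀ g : G, ¬ Bad C B g) ∧ ∀ g : G, ¬ Bad Cᶜ Bᶜ g := by
  by_cases h1 : ∃ g : G, Bad A B g
  · obtain ⟨g, hg⟩ := h1
    exact exists_good_of_bad hA hB hF hg
  by_cases h2 : ∃ g : G, Bad Aᶜ Bᶜ g
  · obtain ⟨g, hg⟩ := h2
    obtain ⟨C, hC, hCH, ⟨F', hF'⟩, h3, h4⟩ :=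
      exists_good_of_bad hA.compl hB.compl hF.compl hg
    rw [halves_compl] at hC
    refine ⟨Cᶜ, compl_mem_halves hC, hCH.compl, ⟨F', ?_⟩, ?_, ?_⟩
    · simpa using hF'.compl
    · simpa using h4
    · simpa using h3
  · push Not at h1 h2
    exact ⟨A, self_mem_halves A, hA, ⟨F, hF⟩, h1, h2⟩

/-- Some half-space `C` of the first tree has exactly the same nesting pattern as `B`. -/
theorem exists_equivalent (hA : HalfSpace H A) (hB : HalfSpace H B) (hF : Close H F A x B y) :
    ∃ C ∈ halves G A, HalfSpace H C ∧
      ∀ (u : G) (s t : Bool), EmptyCorner C u s t ↔ EmptyCorner B u s t := by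
  obtain ⟨C, hC, hCH, ⟨F', hF'⟩, h1, h2⟩ := exists_good hA hB hF
  exact ⟨C, hC, hCH, emptyCorner_iff hCH hB hF' h1 h2⟩

end HalfSpace

/-! ### Sides of edges in a tree -/

namespace GTree
variable {G : Type u} [Group G] {V : Type v} (T : GTree G V) {a b c d p q : V} {H : Subgroup G}

/-- The action of `G` on the vertices of a `G`-tree, as a `MulAction`. -/
abbrev act : MulAction G V where
  smul := T.smul
  one_smul := T.smul_one
  mul_smul := T.smul_mul

theorem inv_smul_smul' (g : G) (x : V) : T.smul g⁻¹ (T.smul g x) = x := by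
  rw [← T.smul_mul, inv_mul_cancel, T.smul_one]

theorem smul_inv_smul' (g : G) (x : V) : T.smul g (T.smul g⁻¹ x) = x := by
  rw [← T.smul_mul, mul_inv_cancel, T.smul_one]

theorem adj_smul_iff (g : G) {x y : V} :
    T.graph.Adj (T.smul g x) (T.smul g y) ↔ T.graph.Adj x y := by
  refine ⟨fun h => ?_, T.adj_smul g x y⟩
  have := T.adj_smul g⁻¹ _ _ h
  rwa [inv_smul_smul', inv_smul_smul'] at this

/-- Connectedness as an induction principle. -/
theorem conn_induction {P : V → Prop} (a : V) (ha : P a)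
    (h : ∀ x y, T.graph.Adj x y → P x → P y) (z : V) : P z := by
  have := (SimpleGraph.reachable_iff_reflTransGen a z).1 (T.connected.preconnected a z)
  induction this with
  | refl => exact ha
  | tail _ h1 ih => exact h _ _ h1 ih

theorem side_self (a b : V) : a ∈ T.side a b := SimpleGraph.Reachable.refl _

theorem side_step {x y : V} (h : T.graph.Adj x y) (hx : x ∈ T.side a b) (hne : s(x, y) ≠ s(a, b)) :
    y ∈ T.side a b := by
  refine SimpleGraph.Reachable.trans hx (SimpleGraph.Adj.reachable ?_)
  rw [SimpleGraph.deleteEdges_adj]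
  exact ⟨h, hne⟩

/-- Induction along the edges inside the `a`-side of `(a, b)`. -/
theorem side_induction {P : V → Prop} (ha : P a)
    (h : ∀ x y, T.graph.Adj x y → x ∈ T.side a b → s(x, y) ≠ s(a, b) → P x → P y) {z : V}
    (hz : z ∈ T.side a b) : P z := by
  have := (SimpleGraph.reachable_iff_reflTransGen a z).1 hz
  induction this with
  | refl => exact ha
  | tail h0 h1 ih =>
    rw [SimpleGraph.deleteEdges_adj] at h1
    have := (SimpleGraph.reachable_iff_reflTransGen _ _).2 h0
    exact h _ _ h1.1 this h1.2 (ih this)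

theorem notMem_side (h : T.graph.Adj a b) : b ∉ T.side a b :=
  SimpleGraph.isBridge_iff.1 (SimpleGraph.isAcyclic_iff_forall_adj_isBridge.1 T.acyclic h)

/-- The only edge leaving the `a`-side of `(a, b)` is `(a, b)` itself. -/
theorem eq_of_boundary (hab : T.graph.Adj a b) {x y : V} (h : T.graph.Adj x y)
    (hx : x ∈ T.side a b) (hy : y ∉ T.side a b) : x = a ∧ y = b := by
  by_cases hne : s(x, y) = s(a, b)
  · rw [Sym2.eq_iff] at hne
    rcases hne with h' | ⟨rfl, rfl⟩
    · exact h'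
    · exact (T.notMem_side hab hx).elim
  · exact (hy (T.side_step h hx hne)).elim

theorem compl_side (h : T.graph.Adj a b) : (T.side a b)ᶜ = T.side b a := by
  ext z
  constructor
  · intro hz
    refine (T.conn_induction (P := fun z => z ∈ T.side a b ∨ z ∈ T.side b a) a
      (Or.inl (T.side_self a b)) ?_ z).resolve_left hz
    rintro x y hxy (hx | hx)
    · by_cases hy : y ∈ T.side a b
      · exact Or.inl hy
      · rw [(T.eq_of_boundary h hxy hx hy).2]; exact Or.inr (T.side_self b a)
    · by_cases hy : y ∈ T.side b a
      · exact Or.inr hy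
      · rw [(T.eq_of_boundary h.symm hxy hx hy).2]; exact Or.inl (T.side_self a b)
  · intro h1 h2
    apply T.notMem_side h
    refine SimpleGraph.Reachable.trans h2 (SimpleGraph.Reachable.symm ?_)
    have : T.side b a = {x | (T.graph.deleteEdges {s(a, b)}).Reachable b x} := by
      unfold side; rw [Sym2.eq_swap]
    rw [this] at h1
    exact h1

theorem mem_side_symm (h : T.graph.Adj a b) {z : V} : z ∈ T.side b a ↔ z ∉ T.side a b := by
  rw [← T.compl_side h]; rfl

theorem side_subset (hcd : T.graph.Adj c d) (h1 : a ∈ T.side c d) (h2 : c ∉ T.side a b) :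
    T.side a b ⊆ T.side c d := by
  intro z hz
  refine T.side_induction (P := fun z => z ∈ T.side c d) h1 ?_ hz
  intro x y hxy hx _ hx'
  by_contra hy
  rw [(T.eq_of_boundary hcd hxy hx' hy).1] at hx
  exact h2 hx

theorem side_injective (hab : T.graph.Adj a b) (hcd : T.graph.Adj c d)
    (h : T.side a b = T.side c d) : a = c ∧ b = d :=
  T.eq_of_boundary hcd hab (h ▸ T.side_self a b) (h ▸ T.notMem_side hab)

theorem side_smul_subset (g : G) (a b : V) {z : V} (hz : z ∈ T.side a b) :
    T.smul g z ∈ T.side (T.smul g a) (T.smul g b) := by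
  refine T.side_induction (P := fun z => T.smul g z ∈ T.side (T.smul g a) (T.smul g b))
    (T.side_self _ _) ?_ hz
  intro x y hxy _ hne hx
  refine T.side_step (T.adj_smul g _ _ hxy) hx fun e => hne ?_
  have := congrArg (Sym2.map (T.smul g⁻¹)) e
  simpa only [Sym2.map_mk, inv_smul_smul'] using this

theorem mem_side_smul (g : G) (a b z : V) :
    z ∈ T.side (T.smul g a) (T.smul g b) ↔ T.smul g⁻¹ z ∈ T.side a b := by
  constructor
  · intro h
    have := T.side_smul_subset g⁻¹ _ _ h
    rwa [inv_smul_smul', inv_smul_smul'] at this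
  · intro h
    have := T.side_smul_subset g _ _ h
    rwa [smul_inv_smul'] at this

theorem smul_side (g : G) (a b : V) :
    letI := T.act
    g • T.side a b = T.side (T.smul g a) (T.smul g b) := by
  let := T.act
  ext z
  rw [mem_side_smul, Set.mem_smul_set_iff_inv_smul_mem]
  rfl

theorem side_nest (hab : T.graph.Adj a b) (hcd : T.graph.Adj c d) :
    T.side a b ⊆ T.side c d ∨ T.side c d ⊆ T.side a b ∨ T.side a b ⊆ T.side d c ∨
      T.side d c ⊆ T.side a b := by
  by_cases hc : c ∈ T.side a b <;> by_cases ha : a ∈ T.side c d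
  · by_cases hb : b ∈ T.side c d
    · right; right; right
      rw [← T.compl_side hcd, ← T.compl_side hab.symm, Set.compl_subset_compl]
      exact T.side_subset hcd hb (by rwa [T.mem_side_symm hab, not_not])
    · obtain ⟨rfl, rfl⟩ := T.eq_of_boundary hcd hab ha hb
      exact Or.inl le_rfl
  · right; left
    exact T.side_subset hab hc ha
  · left
    exact T.side_subset hcd ha hc
  · right; right; left
    by_cases hd : d ∈ T.side a b
    · obtain ⟨rfl, rfl⟩ := T.eq_of_boundary hab hcd.symm hd hc
      exact le_rfl
    · exact T.side_subset hcd.symm (by rwa [T.mem_side_symm hcd]) hd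

end GTree

/-! ### The half-spaces of a splitting -/

namespace GTree
variable {G : Type u} [Group G] {V : Type v} (T : GTree G V) {a b c d p q : V} {H : Subgroup G}

theorem exists_adj_side {a p : V} (h : p ≠ a) : ∃ c, T.graph.Adj a c ∧ p ∈ T.side c a := by
  refine (T.conn_induction (P := fun z => z = a ∨ ∃ c, T.graph.Adj a c ∧ z ∈ T.side c a) a
    (Or.inl rfl) ?_ p).resolve_left h
  rintro x y hxy (rfl | ⟨c, hc, hx⟩)
  · exact Or.inr ⟨y, hxy, T.side_self _ _⟩
  · by_cases hy : y ∈ T.side c a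
    · exact Or.inr ⟨c, hc, hy⟩
    · exact Or.inl (T.eq_of_boundary hc.symm hxy hx hy).2

theorem side_ssubset (hba : T.graph.Adj b a) (haq : T.graph.Adj a q) (hne : b ≠ q) :
    T.side b a ⊂ T.side a q := by
  have hb : b ∈ T.side a q := by
    by_contra hb
    exact hne (T.eq_of_boundary haq hba.symm (T.side_self a q) hb).2
  refine ⟨T.side_subset haq hb (T.notMem_side hba), fun h => T.notMem_side hba (h ?_)⟩
  exact T.side_self a q

/-- Recognizing adjacency of edges from the inclusions between half-spaces: the edge `(p, q)`
starts where `(b, a)` ends, without backtracking, if and only if `side p q` covers `side b a` in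
the poset of half-spaces. -/
theorem covers_iff (hba : T.graph.Adj b a) (hpq : T.graph.Adj p q) :
    (a = p ∧ b ≠ q) ↔ T.side b a ⊂ T.side p q ∧
      ∀ c d, T.graph.Adj c d → ¬ (T.side b a ⊂ T.side c d ∧ T.side c d ⊂ T.side p q) := by
  constructor
  · rintro ⟨rfl, hne⟩
    refine ⟨T.side_ssubset hba hpq hne, ?_⟩
    rintro c d hcd ⟨h1, h2⟩
    by_cases ha : a ∈ T.side c d
    · have hq : q ∉ T.side c d := fun hq => T.notMem_side hpq (h2.subset hq)
      obtain ⟨rfl, rfl⟩ := T.eq_of_boundary hcd hpq ha hq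
      exact h2.ne rfl
    · obtain ⟨rfl, rfl⟩ := T.eq_of_boundary hcd hba (h1.subset (T.side_self b a)) ha
      exact h1.ne rfl
  · rintro ⟨h, hno⟩
    have hap : a = p := by
      by_contra hne
      have ha : a ∈ T.side p q := by
        by_contra ha
        obtain ⟨rfl, rfl⟩ := T.eq_of_boundary hpq hba (h.subset (T.side_self b a)) ha
        exact h.ne rfl
      have hp : p ∉ T.side b a := by
        intro hp
        obtain ⟨rfl, rfl⟩ := T.eq_of_boundary hba hpq hp
          fun hq => T.notMem_side hpq (h.subset hq)
        exact h.ne rfl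
      obtain ⟨c, hac, hpc⟩ := T.exists_adj_side (Ne.symm hne)
      have hbc : b ≠ c := by rintro rfl; exact hp hpc
      rw [T.mem_side_symm hac] at hpc
      exact hno a c hac ⟨T.side_ssubset hba hac hbc, T.side_subset hpq ha hpc,
        fun h => hpc (h (T.side_self p q))⟩
    subst hap
    refine ⟨rfl, ?_⟩
    rintro rfl
    exact T.notMem_side hpq (h.subset (T.side_self b a))

theorem IsSplitting.symm {T : GTree G V} (h : T.IsSplitting a b H) : T.IsSplitting b a H := by
  obtain ⟨h1, h2, h3, h4⟩ := h
  refine ⟨h1.symm, h2, fun c d hcd => ?_, ?_⟩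
  · obtain ⟨g, h | h⟩ := h3 c d hcd
    · exact ⟨g, Or.inr h.symm⟩
    · exact ⟨g, Or.inl h.symm⟩
  · rw [← h4]
    ext g
    exact and_comm

theorem IsSplitting.side_mem_halves {T : GTree G V} (h : T.IsSplitting a b H)
    (hcd : T.graph.Adj c d) : letI := T.act; T.side c d ∈ halves G (T.side a b) := by
  let := T.act
  obtain ⟨g, ⟨rfl, rfl⟩ | ⟨rfl, rfl⟩⟩ := h.2.2.1 c d hcd
  · exact ⟨g, Or.inl (T.smul_side g a b).symm⟩
  · refine ⟨g, Or.inr ?_⟩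
    rw [smul_side, T.compl_side hcd.symm]

theorem exists_side_of_mem_halves {T : GTree G V} (hab : T.graph.Adj a b) {C : Set V}
    (h : letI := T.act; C ∈ halves G (T.side a b)) :
    ∃ g : G, C = T.side (T.smul g a) (T.smul g b) ∨ C = T.side (T.smul g b) (T.smul g a) := by
  let := T.act
  obtain ⟨g, h | h⟩ := h
  · exact ⟨g, Or.inl (by rw [h, smul_side])⟩
  · exact ⟨g, Or.inr (by rw [h, smul_side, T.compl_side ((T.adj_smul_iff g).2 hab)])⟩

/-- The tree of a splitting has no leaves: if `b` were the only neighbour of `a`, then by edge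
transitivity the tree would be a star with centre `b`, and `b` would be a global fixed point. -/
theorem IsSplitting.exists_adj_ne {T : GTree G V} (h : T.IsSplitting a b H) :
    ∃ c, T.graph.Adj c a ∧ c ≠ b := by
  obtain ⟨hab, hfix, htrans, -⟩ := h
  by_contra! hleaf
  have hleaf' : ∀ (g : G) (z : V), T.graph.Adj z (T.smul g a) → z = T.smul g b := by
    intro g z hz
    rw [← T.smul_inv_smul' g z, T.adj_smul_iff] at hz
    rw [← hleaf _ hz, T.smul_inv_smul']
  have hstar : ∀ g : G, T.smul g a ≠ b := by
    intro g hg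
    refine T.no_inversion g a b hab ⟨hg, ?_⟩
    exact (hleaf' g a (by rwa [hg])).symm
  have hnb : ∀ d, T.graph.Adj b d → ∃ g : G, T.smul g a = d ∧ T.smul g b = b := by
    intro d hd
    obtain ⟨g, h | h⟩ := htrans b d hd
    · exact (hstar g h.1).elim
    · exact ⟨g, h⟩
  have hall : ∀ z, z = b ∨ T.graph.Adj b z := by
    refine T.conn_induction b (Or.inl rfl) ?_
    rintro x y hxy (rfl | hx)
    · exact Or.inr hxy
    · obtain ⟨g, rfl, hg⟩ := hnb x hx
      left
      rw [hleaf' g y hxy.symm, hg]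
  obtain ⟨g, hg⟩ := hfix b
  obtain ⟨k, hk, -⟩ := hnb _ ((hall (T.smul g b)).resolve_left hg)
  apply hstar (g⁻¹ * k)
  rw [T.smul_mul, hk, T.inv_smul_smul']

theorem IsSplitting.desc {T : GTree G V} (h : T.IsSplitting a b H) :
    letI := T.act; ∃ C ∈ halves G (T.side a b), C ⊂ T.side a b := by
  obtain ⟨c, hc, hne⟩ := h.exists_adj_ne
  exact ⟨T.side c a, h.side_mem_halves hc, T.side_ssubset hc h.1 hne⟩

theorem IsSplitting.halfSpace {T : GTree G V} (h : T.IsSplitting a b H) :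
    letI := T.act; HalfSpace H (T.side a b) := by
  let := T.act
  have hab := h.1
  have hg : ∀ g : G, T.graph.Adj (T.smul g a) (T.smul g b) := fun g => T.adj_smul g _ _ hab
  refine ⟨fun g => ?_, fun g => ?_, fun g => ?_, fun x y => ?_, ⟨a, ?_⟩, h.desc, ?_⟩
  · rw [smul_side, ← h.2.2.2]
    constructor
    · intro e
      exact T.side_injective (hg g) hab e
    · rintro ⟨h1, h2⟩
      rw [h1, h2]
  · rw [smul_side, T.compl_side hab]
    intro e
    exact T.no_inversion g a b hab (T.side_injective (hg g) hab.symm e)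
  · rw [smul_side, T.compl_side hab]
    exact T.side_nest (hg g) hab
  · obtain ⟨w⟩ := T.connected.preconnected x y
    refine ((List.finite_toSet w.darts).image fun e => T.side e.fst e.snd).subset ?_
    rintro C ⟨hC, hx, hy⟩
    obtain ⟨e, he, h1, h2⟩ := w.exists_boundary_dart C hx hy
    refine ⟨e, he, ?_⟩
    obtain ⟨g, rfl | rfl⟩ := exists_side_of_mem_halves hab hC
    · obtain ⟨e1, e2⟩ := T.eq_of_boundary (hg g) e.adj h1 h2
      simp only [e1, e2]
    · obtain ⟨e1, e2⟩ := T.eq_of_boundary (hg g).symm e.adj h1 h2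
      simp only [e1, e2]
  · intro k hk
    rw [← h.2.2.2] at hk
    exact hk.1
  · obtain ⟨C, hC, hCs⟩ := h.symm.desc
    rw [← T.compl_side hab] at hC hCs
    rw [HalfSpace.halves_compl] at hC
    exact ⟨C, hC, hCs⟩

/-- Any half-space with stabilizer `H` is a side of an edge defining a splitting over `H`, with
the same tree. -/
theorem IsSplitting.of_mem_halves {T : GTree G V} (h : T.IsSplitting a b H) {C : Set V}
    (hC : letI := T.act; C ∈ halves G (T.side a b)) (hCH : letI := T.act; HalfSpace H C) :
    ∃ c d, C = T.side c d ∧ T.IsSplitting c d H := by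
  let := T.act
  obtain ⟨g, hg⟩ := exists_side_of_mem_halves h.1 hC
  have key : ∀ c d, T.graph.Adj c d → C = T.side c d → T.IsSplitting c d H := by
    rintro c d hcd rfl
    refine ⟨hcd, h.2.1, fun p q hpq => ?_, ?_⟩
    · obtain ⟨k, hk⟩ := h.2.2.1 c d hcd
      obtain ⟨l, hl⟩ := h.2.2.1 p q hpq
      refine ⟨l * k⁻¹, ?_⟩
      rcases hk with ⟨rfl, rfl⟩ | ⟨rfl, rfl⟩ <;> rcases hl with ⟨rfl, rfl⟩ | ⟨rfl, rfl⟩ <;>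
        simp [T.smul_mul, T.inv_smul_smul']
    · ext k
      rw [← hCH.stab, smul_side]
      constructor
      · rintro ⟨h1, h2⟩
        rw [h1, h2]
      · intro e
        exact T.side_injective (T.adj_smul k _ _ hcd) hcd e
  have hadj := T.adj_smul g _ _ h.1
  rcases hg with hg | hg
  · exact ⟨_, _, hg, key _ _ hadj hg⟩
  · exact ⟨_, _, hg, key _ _ hadj.symm hg⟩

/-! ### Reconstructing the tree from the inclusions between half-spaces -/

/-- The origin of the directed edge with label `p = (g, s)`: the translate by `g` of `(a, b)` if
`s` is `true`, and of `(b, a)` if `s` is `false`. Every directed edge of the tree of a splitting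
has a label. -/
def org (a b : V) (p : G × Bool) : V := T.smul p.1 (if p.2 then a else b)

/-- The label of the reversed edge. -/
def bar {I : Type*} (p : I × Bool) : I × Bool := (p.1, !p.2)

theorem bar_bar {I : Type*} (p : I × Bool) : bar (bar p) = p := by simp [bar]

/-- The side of the directed edge with label `p` that contains its origin. -/
def hs (a b : V) (p : G × Bool) : Set V := T.side (T.org a b p) (T.org a b (bar p))

theorem org_adj (hab : T.graph.Adj a b) (p : G × Bool) :
    T.graph.Adj (T.org a b p) (T.org a b (bar p)) := by
  obtain ⟨g, s⟩ := p
  refine T.adj_smul g _ _ ?_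
  cases s
  · simpa [bar] using hab.symm
  · simpa [bar] using hab

theorem mem_hs (hab : T.graph.Adj a b) (p : G × Bool) (z : V) :
    z ∈ T.hs a b p ↔ (T.smul p.1⁻¹ z ∈ T.side a b ↔ p.2 = true) := by
  obtain ⟨g, s⟩ := p
  simp only [hs, org, bar]
  rw [mem_side_smul]
  cases s
  · simp [T.mem_side_symm hab]
  · simp

theorem hs_subset_iff (hab : T.graph.Adj a b) (p q : G × Bool) :
    T.hs a b p ⊆ T.hs a b q ↔
      letI := T.act; EmptyCorner (T.side a b) (p.1⁻¹ * q.1) p.2 (!q.2) := by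
  let := T.act
  have key : ∀ z, ¬ (z ∈ T.hs a b p ∧ z ∉ T.hs a b q) ↔
      ¬ ((T.smul p.1⁻¹ z ∈ T.side a b ↔ p.2 = true) ∧
        (T.smul q.1⁻¹ z ∈ T.side a b ↔ (!q.2) = true)) := by
    intro z
    rw [T.mem_hs hab, T.mem_hs hab]
    cases q.2 <;> simp
  constructor
  · intro h x
    have := (key (T.smul p.1 x)).1 fun hz => hz.2 (h hz.1)
    rw [inv_smul_smul', ← T.smul_mul] at this
    change ¬ ((x ∈ T.side a b ↔ p.2 = true) ∧
        (T.smul (p.1⁻¹ * q.1)⁻¹ x ∈ T.side a b ↔ (!q.2) = true))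
    rwa [mul_inv_rev, inv_inv]
  · intro h z hz
    by_contra hc
    refine (key z).2 ?_ ⟨hz, hc⟩
    have : ¬ ((T.smul p.1⁻¹ z ∈ T.side a b ↔ p.2 = true) ∧
        (T.smul (p.1⁻¹ * q.1)⁻¹ (T.smul p.1⁻¹ z) ∈ T.side a b ↔ (!q.2) = true)) :=
      h (T.smul p.1⁻¹ z)
    rwa [mul_inv_rev, inv_inv, ← T.smul_mul, mul_inv_cancel_right] at this

theorem IsSplitting.exists_org {T : GTree G V} (h : T.IsSplitting a b H)
    (hcd : T.graph.Adj c d) : ∃ p, T.org a b p = c ∧ T.org a b (bar p) = d := by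
  obtain ⟨g, hg | hg⟩ := h.2.2.1 c d hcd
  · exact ⟨(g, true), by simpa [org, bar] using hg⟩
  · exact ⟨(g, false), by simpa [org, bar] using hg.symm⟩

theorem IsSplitting.adj_iff {T : GTree G V} (h : T.IsSplitting a b H) {x y : V} :
    T.graph.Adj x y ↔ ∃ p, T.org a b p = x ∧ T.org a b (bar p) = y := by
  refine ⟨h.exists_org, ?_⟩
  rintro ⟨p, rfl, rfl⟩
  exact T.org_adj h.1 p

theorem IsSplitting.org_surjective {T : GTree G V} (h : T.IsSplitting a b H) :
    Function.Surjective (T.org a b) := by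
  intro x
  have : ∃ c, T.graph.Adj x c := by
    by_cases hx : a = x
    · subst hx; exact ⟨b, h.1⟩
    · obtain ⟨c, hc, -⟩ := T.exists_adj_side hx
      exact ⟨c, hc⟩
  obtain ⟨c, hc⟩ := this
  obtain ⟨p, hp, -⟩ := h.exists_org hc
  exact ⟨p, hp⟩

/-- Two directed edges have the same origin if and only if a condition holds that involves only
the inclusions between half-spaces. -/
theorem IsSplitting.org_eq_iff {T : GTree G V} (h : T.IsSplitting a b H) (p q : G × Bool) :
    T.org a b p = T.org a b q ↔
      (T.hs a b p ⊆ T.hs a b q ∧ T.hs a b q ⊆ T.hs a b p) ∨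
      ((T.hs a b (bar p) ⊆ T.hs a b q ∧ ¬ T.hs a b q ⊆ T.hs a b (bar p)) ∧
        ∀ r, ¬ ((T.hs a b (bar p) ⊆ T.hs a b r ∧ ¬ T.hs a b r ⊆ T.hs a b (bar p)) ∧
          (T.hs a b r ⊆ T.hs a b q ∧ ¬ T.hs a b q ⊆ T.hs a b r))) := by
  have h1 : T.org a b p = T.org a b q ∧ T.org a b (bar p) = T.org a b (bar q) ↔
      (T.hs a b p ⊆ T.hs a b q ∧ T.hs a b q ⊆ T.hs a b p) := by
    rw [← Set.Subset.antisymm_iff]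
    constructor
    · rintro ⟨e1, e2⟩
      rw [hs, hs, e1, e2]
    · exact T.side_injective (T.org_adj h.1 p) (T.org_adj h.1 q)
  have h2 := T.covers_iff (T.org_adj h.1 p).symm (T.org_adj h.1 q)
  have h3 : T.side (T.org a b (bar p)) (T.org a b p) = T.hs a b (bar p) := by
    rw [hs, bar_bar]
  rw [h3] at h2
  have h4 : (∀ c d, T.graph.Adj c d → ¬ (T.hs a b (bar p) ⊂ T.side c d ∧
      T.side c d ⊂ T.side (T.org a b q) (T.org a b (bar q)))) ↔
      ∀ r, ¬ (T.hs a b (bar p) ⊂ T.hs a b r ∧ T.hs a b r ⊂ T.hs a b q) := by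
    constructor
    · intro h' r
      exact h' _ _ (T.org_adj h.1 r)
    · intro h' c d hcd
      obtain ⟨r, rfl, rfl⟩ := h.exists_org hcd
      exact h' r
  rw [h4] at h2
  simp only [← ssubset_iff_subset_not_subset]
  rw [← h1]
  refine Iff.trans ?_ (or_congr Iff.rfl h2)
  tauto

/-- If the translates of two half-spaces are nested in the same way, then labels of directed edges
have equal origins in one tree if and only if they do in the other, so that matching the origins
of edges with equal labels is an isomorphism. -/
theorem equivIso_of_emptyCorner {W : Type w} {T₁ : GTree G V} {T₂ : GTree G W} {a₁ b₁ : V}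
    {a₂ b₂ : W} (h₁ : T₁.IsSplitting a₁ b₁ H) (h₂ : T₂.IsSplitting a₂ b₂ H)
    (hE : letI := T₁.act; letI := T₂.act; ∀ (u : G) (s t : Bool),
      EmptyCorner (T₁.side a₁ b₁) u s t ↔ EmptyCorner (T₂.side a₂ b₂) u s t) :
    T₁.EquivIso T₂ := by
  have hle : ∀ p q, T₁.hs a₁ b₁ p ⊆ T₁.hs a₁ b₁ q ↔ T₂.hs a₂ b₂ p ⊆ T₂.hs a₂ b₂ q := by
    intro p q
    rw [T₁.hs_subset_iff h₁.1, T₂.hs_subset_iff h₂.1]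
    exact hE _ _ _
  have hker : ∀ p q, T₁.org a₁ b₁ p = T₁.org a₁ b₁ q ↔ T₂.org a₂ b₂ p = T₂.org a₂ b₂ q := by
    intro p q
    rw [h₁.org_eq_iff, h₂.org_eq_iff]
    simp only [hle]
  let f : V → W := fun x => T₂.org a₂ b₂ (Function.surjInv h₁.org_surjective x)
  have hf : ∀ p, f (T₁.org a₁ b₁ p) = T₂.org a₂ b₂ p := fun p =>
    (hker _ _).1 (Function.surjInv_eq h₁.org_surjective _)
  have hinj : Function.Injective f := by
    intro x y e
    obtain ⟨p, rfl⟩ := h₁.org_surjective x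
    obtain ⟨q, rfl⟩ := h₁.org_surjective y
    rw [hf, hf] at e
    exact (hker _ _).2 e
  have hsurj : Function.Surjective f := by
    intro z
    obtain ⟨p, rfl⟩ := h₂.org_surjective z
    exact ⟨_, hf p⟩
  refine ⟨⟨Equiv.ofBijective f ⟨hinj, hsurj⟩, ?_⟩, ?_⟩
  · intro x y
    change T₂.graph.Adj (f x) (f y) ↔ T₁.graph.Adj x y
    rw [h₁.adj_iff, h₂.adj_iff]
    refine exists_congr fun p => ?_
    rw [← hf p, ← hf (bar p), hinj.eq_iff, hinj.eq_iff]
  · intro g x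
    change f (T₁.smul g x) = T₂.smul g (f x)
    obtain ⟨p, rfl⟩ := h₁.org_surjective x
    have e₁ : T₁.smul g (T₁.org a₁ b₁ p) = T₁.org a₁ b₁ (g * p.1, p.2) := by
      simp only [org, T₁.smul_mul]
    rw [e₁, hf, hf]
    simp only [org, T₂.smul_mul]

/-- Splittings with almost equal standard sets have isomorphic trees. -/
theorem equivIso_of_close {W : Type w} {K : Subgroup G} {T₁ : GTree G V} {T₂ : GTree G W}
    {a₁ b₁ : V} {a₂ b₂ : W} (h₁ : T₁.IsSplitting a₁ b₁ H) (h₂ : T₂.IsSplitting a₂ b₂ K) {x : V}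
    {y : W} {F : Finset G}
    (hF : letI := T₁.act; letI := T₂.act; Close H F (T₁.side a₁ b₁) x (T₂.side a₂ b₂) y) :
    T₁.EquivIso T₂ := by
  let := T₁.act
  let := T₂.act
  have hA := h₁.halfSpace
  have hB := h₂.halfSpace
  obtain rfl : H = K := le_antisymm (HalfSpace.le_right hA hB hF) (HalfSpace.le_left hA hB hF)
  obtain ⟨C, hC, hCH, hE⟩ := HalfSpace.exists_equivalent hA hB hF
  obtain ⟨c, d, rfl, h⟩ := h₁.of_mem_halves hC hCH
  exact equivIso_of_emptyCorner h h₂ hE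

end GTree

/-- if `X` and `Y` arise from splittings `σ` and `τ` of `G` over `H` and
`K`, and two of the four corners of `(X, Y)` are `H`-finite, then `σ` and `τ` are
isomorphic splittings: there is a `G`-equivariant graph isomorphism of their trees. -/
theorem statement6 {G : Type u} [Group G] {V₁ : Type v} {V₂ : Type w} (H K : Subgroup G)
    (T₁ : GTree G V₁) (a₁ b₁ : V₁) (h₁ : T₁.IsSplitting a₁ b₁ H) (v₁ : V₁)
    (X : Set G) (hX : X = T₁.standardSet a₁ b₁ v₁)
    (T₂ : GTree G V₂) (a₂ b₂ : V₂) (h₂ : T₂.IsSplitting a₂ b₂ K) (v₂ : V₂)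
    (Y : Set G) (hY : Y = T₂.standardSet a₂ b₂ v₂)
    (h2 : TwoOfFour (HFinite H (X ∩ Y)) (HFinite H (X ∩ Yᶜ))
      (HFinite H (Xᶜ ∩ Y)) (HFinite H (Xᶜ ∩ Yᶜ))) :
    T₁.EquivIso T₂ := by
  classical
  let := T₁.act
  let := T₂.act
  have hA := h₁.halfSpace
  have hB := h₂.halfSpace
  have hXm : ∀ g, g ∈ X ↔ g • v₁ ∈ T₁.side a₁ b₁ := by subst hX; exact fun g => Iff.rfl
  have hYm : ∀ g, g ∈ Y ↔ g • v₂ ∈ T₂.side a₂ b₂ := by subst hY; exact fun g => Iff.rfl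
  simp only [hFinite_iff] at h2
  have hunion : ∀ {F F' : Finset G} {g : G}, g ∈ Cosets H F ∨ g ∈ Cosets H F' →
      g ∈ Cosets H (F ∪ F') := by
    rintro F F' g (⟨f, hf, h⟩ | ⟨f, hf, h⟩)
    · exact ⟨f, Finset.mem_union_left _ hf, h⟩
    · exact ⟨f, Finset.mem_union_right _ hf, h⟩
  -- a set meeting the corners `P ∩ Q` and `P ∩ Qᶜ` in `H`-finite sets is `H`-finite
  have hsplit : ∀ {P Q : Set G} {F F' : Finset G}, P ∩ Q ⊆ Cosets H F → P ∩ Qᶜ ⊆ Cosets H F' →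
      P ⊆ Cosets H (F ∪ F') := by
    intro P Q F F' h h' g hg
    by_cases hq : g ∈ Q
    · exact hunion (Or.inl (h ⟨hg, hq⟩))
    · exact hunion (Or.inr (h' ⟨hg, hq⟩))
  have hX₁ : ∀ F, ¬ X ⊆ Cosets H F := fun F h =>
    hA.not_small v₁ ((small_cosets F).mono fun g hg => h ((hXm g).2 hg))
  have hX₂ : ∀ F, ¬ Xᶜ ⊆ Cosets H F := fun F h =>
    hA.compl.not_small v₁ ((small_cosets F).mono fun g hg => h fun h' => hg ((hXm g).1 h'))
  have hY₁ : ∀ F, ¬ Y ⊆ Cosets H F := fun F h =>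
    HalfSpace.not_hFinite hA hB v₁ v₂ F fun g hg => h ((hYm g).2 hg)
  have hY₂ : ∀ F, ¬ Yᶜ ⊆ Cosets H F := fun F h =>
    HalfSpace.not_hFinite hA hB.compl v₁ v₂ F fun g hg => h fun h' => hg ((hYm g).1 h')
  rcases h2 with ⟨⟨F, h⟩, F', h'⟩ | ⟨⟨F, h⟩, F', h'⟩ | ⟨⟨F, h⟩, F', h'⟩ | ⟨⟨F, h⟩, F', h'⟩ |
    ⟨⟨F, h⟩, F', h'⟩ | ⟨⟨F, h⟩, F', h'⟩
  · exact (hX₁ _ (hsplit h h')).elim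
  · rw [Set.inter_comm] at h h'
    exact (hY₁ _ (hsplit h h')).elim
  · -- `X` is close to `Yᶜ`, the standard set of the reversed edge
    refine GTree.equivIso_of_close (F := F ∪ F') (x := v₁) (y := v₂) h₁ h₂.symm fun g hg => ?_
    rw [← hXm, T₂.mem_side_symm h₂.1, ← hYm] at hg
    refine hunion ?_
    by_cases hgX : g ∈ X
    · refine Or.inl (h ⟨hgX, ?_⟩)
      by_contra hgY
      exact hg ⟨fun _ => hgY, fun _ => hgX⟩
    · exact Or.inr (h' ⟨hgX, fun hgY => hg ⟨fun h => (hgX h).elim, fun h => (h hgY).elim⟩⟩)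
  · refine GTree.equivIso_of_close (F := F ∪ F') (x := v₁) (y := v₂) h₁ h₂ fun g hg => ?_
    rw [← hXm, ← hYm] at hg
    refine hunion ?_
    by_cases hgX : g ∈ X
    · exact Or.inl (h ⟨hgX, fun hgY => hg ⟨fun _ => hgY, fun _ => hgX⟩⟩)
    · refine Or.inr (h' ⟨hgX, ?_⟩)
      by_contra hgY
      exact hg ⟨fun h => (hgX h).elim, fun h => (hgY h).elim⟩
  · rw [Set.inter_comm] at h h'
    exact (hY₂ _ (hsplit h h')).elim
  · exact (hX₂ _ (hsplit h h')).elim
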